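/- arXiv:2104.14530 — 2 statements merged into one kernel-verified Lean document; each statement's English description precedes it below -/
import Mathlib

section
/- Let P : P₂^{sym}(2n) → P₂(2n) be the map sending each pair (i,j) of π ∈ P₂^{sym}(2n) to the pair (|i|,|j|). Then for every pair partition π ∈ P₂(2n): the fiber P⁻¹(π) has exactly 2ⁿ elements; every σ ∈ P⁻¹(π) has the same number of cycles, equal to c(π); and Σ_{σ ∈ P⁻¹(π)} q₋^{c₋(σ)} q₊^{l_c(σ)} = (1+q₋)^{c(π)} (2q₊)^{n−c(π)}. -/
noncomputable section

namespace TypeB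

/-! ### Symmetric pair partitions of [±2n] and their cycles -/

/-- Negation of a set of integers. -/
def negSet (B : Set ℤ) : Set ℤ := (fun x : ℤ => -x) '' B

/-- The set [±m] = {−m,…,−1,1,…,m} ⊆ ℤ. -/
def pmSet (m : ℕ) : Set ℤ := {i | i ≠ 0 ∧ |i| ≤ (m : ℤ)}

/-- π is a set partition of S. -/
def IsPartitionOn (S : Set ℤ) (π : Set (Set ℤ)) : Prop :=
  (∀ B ∈ π, B ⊆ S ∧ B.Nonempty) ∧ (∀ x ∈ S, ∃! B, B ∈ π ∧ x ∈ B)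

def IsPairB (B : Set ℤ) : Prop := ∃ a b : ℤ, a ≠ b ∧ B = {a, b}

def IsSingleB (B : Set ℤ) : Prop := ∃ a : ℤ, B = {a}

/-- P₂^{sym}(2n): partitions of [±2n] into pairs, invariant under negation, with no
pair equal to its own negation. -/
def P2sym (n : ℕ) (π : Set (Set ℤ)) : Prop :=
  IsPartitionOn (pmSet (2 * n)) π ∧ (∀ B ∈ π, IsPairB B) ∧
  (∀ B ∈ π, negSet B ∈ π) ∧ (∀ B ∈ π, negSet B ≠ B)

/-- Noncrossing partitions: no i < j < k < l with i,k in one block and j,l in another. -/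
def NonCrossing (π : Set (Set ℤ)) : Prop :=
  ¬ ∃ (i j k l : ℤ) (B C : Set ℤ), B ∈ π ∧ C ∈ π ∧ B ≠ C ∧
    i < j ∧ j < k ∧ k < l ∧ i ∈ B ∧ k ∈ B ∧ j ∈ C ∧ l ∈ C

/-- Right legs of positive pairs. -/
def posRightLegs (π : Set (Set ℤ)) : Set ℤ :=
  {b | ∃ a : ℤ, a < b ∧ ({a, b} : Set ℤ) ∈ π ∧ -a < b}

/-- Left legs of negative pairs. -/
def negLeftLegs (π : Set (Set ℤ)) : Set ℤ :=
  {a | ∃ b : ℤ, a < b ∧ ({a, b} : Set ℤ) ∈ π ∧ ¬(-a < b)}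

/-- Pairs of ρ do not cover singletons of ρ. -/
def NoCoveredSingleton (ρ : Set (Set ℤ)) : Prop :=
  ¬ ∃ a b c : ℤ, a < c ∧ c < b ∧ ({a, b} : Set ℤ) ∈ ρ ∧ ({c} : Set ℤ) ∈ ρ

/-- The defining properties of the noncrossing partition π̂ of [±m] associated with π:
a partition into pairs and singletons, noncrossing, symmetric, with every block inside
{1,…,m} or {−m,…,−1}, having the same right legs of positive pairs and the same left
legs of negative pairs as π, and whose pairs do not cover singletons. -/
def HatProps (m : ℕ) (π ρ : Set (Set ℤ)) : Prop :=
  IsPartitionOn (pmSet m) ρ ∧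
  (∀ B ∈ ρ, IsPairB B ∨ IsSingleB B) ∧
  NonCrossing ρ ∧
  (∀ B ∈ ρ, negSet B ∈ ρ) ∧
  (∀ B ∈ ρ, (∀ x ∈ B, 0 < x) ∨ (∀ x ∈ B, x < 0)) ∧
  posRightLegs ρ = posRightLegs π ∧
  negLeftLegs ρ = negLeftLegs π ∧
  NoCoveredSingleton ρ

open Classical in
/-- The partition π̂ associated with π (it exists and is unique). -/
def hatOf (m : ℕ) (π : Set (Set ℤ)) : Set (Set ℤ) :=
  if h : ∃ ρ, HatProps m π ρ then h.choose else ∅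

/-- Two pairs A,B of π are connected when some block C of ρ = π̂ meets both. -/
def connStep (π ρ : Set (Set ℤ)) (A B : Set ℤ) : Prop :=
  A ∈ π ∧ B ∈ π ∧ ∃ C ∈ ρ, (A ∩ C).Nonempty ∧ (B ∩ C).Nonempty

/-- The cycle (connected component) of pairs of π through A. -/
def compOf (π ρ : Set (Set ℤ)) (A : Set ℤ) : Set (Set ℤ) :=
  {B | Relation.ReflTransGen (connStep π ρ) A B}

/-- The set of all cycles (connected components of pairs). -/
def CompsOf (π ρ : Set (Set ℤ)) : Set (Set (Set ℤ)) :=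
  {K | ∃ A ∈ π, K = compOf π ρ A}

/-- A component is negative when its support is invariant under negation. -/
def NegComp (K : Set (Set ℤ)) : Prop := negSet (⋃₀ K) = ⋃₀ K

/-- c₋(π): the number of negative cycles of π ∈ P₂^{sym}(2n). -/
def cNeg (n : ℕ) (π : Set (Set ℤ)) : ℕ :=
  {K ∈ CompsOf π (hatOf (2 * n) π) | NegComp K}.ncard

/-- c(π): the number of cycles of π ∈ P₂^{sym}(2n); positive cycles come in mirror
pairs, each mirror pair counted once. -/
def cCount (n : ℕ) (π : Set (Set ℤ)) : ℕ :=
  cNeg n π + {K ∈ CompsOf π (hatOf (2 * n) π) | ¬NegComp K}.ncard / 2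



/-- The set {1,…,m} ⊆ ℤ. -/
def posInterval (m : ℕ) : Set ℤ := {i | 1 ≤ i ∧ i ≤ (m : ℤ)}

/-- P₂(m): pair partitions (perfect matchings) of {1,…,m}. -/
def P2on (m : ℕ) (π : Set (Set ℤ)) : Prop :=
  IsPartitionOn (posInterval m) π ∧ ∀ B ∈ π, IsPairB B

/-- The set of left legs of a partition into pairs. -/
def leftLegs (π : Set (Set ℤ)) : Set ℤ :=
  {a | ∃ b : ℤ, a < b ∧ ({a, b} : Set ℤ) ∈ π}

/-- The defining properties of the unique noncrossing pair partition π̂ of {1,…,m} with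
the same set of left legs as π. -/
def Hat2Props (m : ℕ) (π ρ : Set (Set ℤ)) : Prop :=
  P2on m ρ ∧ NonCrossing ρ ∧ leftLegs ρ = leftLegs π

open Classical in
/-- The noncrossing pair partition π̂ of {1,…,m} with the same left legs as π. -/
def hat2Of (m : ℕ) (π : Set (Set ℤ)) : Set (Set ℤ) :=
  if h : ∃ ρ, Hat2Props m π ρ then h.choose else ∅

/-- c(π) for π ∈ P₂(m): the number of cycles (connected components) of the union of π
with π̂, viewed as a 2-regular multigraph (components counted through the pairs of π). -/
def c2Count (m : ℕ) (π : Set (Set ℤ)) : ℕ :=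
  (CompsOf π (hat2Of m π)).ncard

/-- The projection P : P₂^{sym}(2n) → P₂(2n) sending each pair (i,j) to (|i|,|j|). -/
def Pmap (σ : Set (Set ℤ)) : Set (Set ℤ) :=
  {C | ∃ B ∈ σ, C = (fun x : ℤ => |x|) '' B}

/-!
A pair partition consists of the pairs `{x, F x}` of a fixed-point-free involution `F`, and the
cycles of two pair partitions are the orbits of the group generated by their involutions.

An element of the fiber over `π` amounts to a choice of a sign for each pair of `π`, the sign saying
whether the pair lifts to two pairs of points of equal or of opposite signs; hence there are `2ⁿ`
of them. The associated noncrossing partition of each of them is `π̂ ∪ -π̂`, so its cycles cover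
those of `π` two-to-one: a cycle of `π` lifts to one negative cycle if the product of the signs
around it is `-1`, and to a mirror pair of positive cycles otherwise. The products of signs around
the cycles define a surjective homomorphism `{±1}ⁿ → {±1}^c(π)`, whose fibers have `2^(n - c(π))`
elements.
-/

section Involutions

variable {α : Type*} {S : Set α} {F H f h : α → α} {x y : α}

/-- A partition of `S` into pairs and singletons, encoded as the involution that exchanges the
points of each block, extended by the identity off `S`. -/
structure IsInvolutionOn (S : Set α) (F : α → α) : Prop where
  involutive : Function.Involutive F
  apply_of_notMem : ∀ ⦃x⦄, x ∉ S → F x = x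

/-- A partition of `S` into pairs, encoded like `IsInvolutionOn`. -/
structure IsMatchingOn (S : Set α) (F : α → α) : Prop extends IsInvolutionOn S F where
  apply_ne : ∀ ⦃x⦄, x ∈ S → F x ≠ x

theorem IsInvolutionOn.mem_of_apply_ne (hF : IsInvolutionOn S F) (hx : F x ≠ x) : x ∈ S :=
  not_imp_comm.1 (@hF.apply_of_notMem x) hx

theorem IsInvolutionOn.apply_mem (hF : IsInvolutionOn S F) (hx : x ∈ S) : F x ∈ S := by
  by_contra hFx
  exact hFx ((hF.involutive.injective (hF.apply_of_notMem hFx)).symm ▸ hx)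

theorem IsInvolutionOn.iterate_comp_mem (hF : IsInvolutionOn S F) (hH : IsInvolutionOn S H)
    (hx : x ∈ S) (k : ℕ) : (H ∘ F)^[k] x ∈ S :=
  Set.MapsTo.iterate (fun _ hy => hH.apply_mem (hF.apply_mem hy)) k hx

theorem IsInvolutionOn.mem_periodicPts_comp (hS : S.Finite) (hF : IsInvolutionOn S F)
    (hH : IsInvolutionOn S H) (hx : x ∈ S) : x ∈ Function.periodicPts (H ∘ F) := by
  obtain ⟨k, l, hkl, heq⟩ :=
    Set.Finite.exists_lt_map_eq_of_forall_mem (hF.iterate_comp_mem hH hx) hS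
  exact ⟨l - k, Nat.sub_pos_of_lt hkl, Function.iterate_cancel
    (hH.involutive.injective.comp hF.involutive.injective) heq.symm⟩

/-- The orbits of the product of two matchings never meet their mirror images: going around a
cycle of a union of two matchings, one returns to a point only after an even number of steps. -/
theorem IsMatchingOn.iterate_comp_ne_apply (hf : IsMatchingOn S f) (hh : IsMatchingOn S h)
    (k : ℕ) (hx : x ∈ S) : (h ∘ f)^[k] x ≠ f x := by
  induction k using Nat.twoStepInduction generalizing x with
  | zero => exact (hf.apply_ne hx).symm
  | one => exact hh.apply_ne (hf.apply_mem hx)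
  | more k ih _ =>
    intro hk
    rw [Function.iterate_succ_apply', Function.iterate_succ_apply, Function.comp_apply,
      hh.involutive.eq_iff, hf.involutive.eq_iff] at hk
    exact ih (hh.apply_mem (hf.apply_mem hx)) hk

/-- The partition encoded by an involution `F` on `S`. -/
def blocks (S : Set α) (F : α → α) : Set (Set α) := (fun x => {x, F x}) '' S

theorem mem_blocks (hx : x ∈ S) : {x, F x} ∈ blocks S F := Set.mem_image_of_mem _ hx

theorem IsInvolutionOn.pair_mem_blocks_iff (hF : IsInvolutionOn S F) :
    {x, y} ∈ blocks S F ↔ x ∈ S ∧ F x = y := by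
  constructor
  · rintro ⟨z, hz, hzxy⟩
    rcases Set.pair_eq_pair_iff.1 hzxy with ⟨rfl, rfl⟩ | ⟨rfl, rfl⟩
    · exact ⟨hz, rfl⟩
    · exact ⟨hF.apply_mem hz, hF.involutive z⟩
  · rintro ⟨hx, rfl⟩
    exact mem_blocks hx

theorem IsInvolutionOn.eq_pair_of_mem_blocks (hF : IsInvolutionOn S F) {B : Set α}
    (hB : B ∈ blocks S F) (hx : x ∈ B) : x ∈ S ∧ B = {x, F x} := by
  obtain ⟨y, hy, rfl⟩ := hB
  rcases hx with rfl | rfl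
  · exact ⟨hy, rfl⟩
  · exact ⟨hF.apply_mem hy, by rw [hF.involutive, Set.pair_comm]⟩

end Involutions

section Connectedness

variable {α β : Type*} {F H : α → α} {x y : α}

/-- `Conn F H x y`: the points `x` and `y` are joined by a path with edges `z — F z` and
`z — H z`. -/
def Conn (F H : α → α) : α → α → Prop :=
  Relation.ReflTransGen fun x y => y = F x ∨ y = H x

/-- The component of `x` in the graph with edges `z — F z` and `z — H z`. -/
def connClass (F H : α → α) (x : α) : Set α := {y | Conn F H x y}

theorem Conn.left (hxy : Conn F H x y) : Conn F H x (F y) := hxy.tail (Or.inl rfl)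

theorem Conn.right (hxy : Conn F H x y) : Conn F H x (H y) := hxy.tail (Or.inr rfl)

theorem Conn.iterate_comp (k : ℕ) : Conn F H x ((H ∘ F)^[k] x) := by
  induction k with
  | zero => exact .refl
  | succ k ih => exact Function.iterate_succ_apply' (H ∘ F) k x ▸ ih.left.right

theorem Conn.symm (hF : Function.Involutive F) (hH : Function.Involutive H)
    (hxy : Conn F H x y) : Conn F H y x := by
  refine Relation.ReflTransGen.mono (fun z w => ?_) _ _ (Relation.ReflTransGen.swap _ _ hxy)
  exact Or.imp (fun hz => hF.eq_iff.1 hz.symm) fun hz => hH.eq_iff.1 hz.symm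

theorem connClass_eq_iff (hF : Function.Involutive F) (hH : Function.Involutive H) :
    connClass F H x = connClass F H y ↔ Conn F H x y := by
  refine ⟨fun hxy => ?_, fun hxy => Set.ext fun z => ?_⟩
  · exact (hxy ▸ Relation.ReflTransGen.refl : y ∈ connClass F H x)
  · exact ⟨(hxy.symm hF hH).trans, hxy.trans⟩

theorem image_connClass {F' H' : β → β} {φ : α → β} (hF : Function.Semiconj φ F F')
    (hH : Function.Semiconj φ H H') (x : α) :
    φ '' connClass F H x = connClass F' H' (φ x) := by
  refine Set.Subset.antisymm (Set.image_subset_iff.2 fun y hxy => ?_) fun y hxy => ?_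
  · refine Relation.ReflTransGen.lift φ (fun z w => ?_) _ _ hxy
    rintro (rfl | rfl)
    · exact Or.inl (hF z)
    · exact Or.inr (hH z)
  · induction hxy with
    | refl => exact ⟨x, .refl, rfl⟩
    | tail _ hstep ih =>
      obtain ⟨z, hxz, rfl⟩ := ih
      rcases hstep with rfl | rfl
      · exact ⟨F z, hxz.left, hF z⟩
      · exact ⟨H z, hxz.right, hH z⟩

theorem Conn.exists_iterate_comp (hF : Function.Involutive F) (hH : Function.Involutive H)
    (hx : x ∈ Function.periodicPts (H ∘ F)) (hxy : Conn F H x y) :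
    ∃ k, y = (H ∘ F)^[k] x ∨ y = F ((H ∘ F)^[k] x) := by
  induction hxy with
  | refl => exact ⟨0, Or.inl rfl⟩
  | tail _ hstep ih =>
    obtain ⟨k, rfl | rfl⟩ := ih <;> rcases hstep with rfl | rfl
    · exact ⟨k, Or.inr rfl⟩
    · obtain ⟨p, hp, hxp⟩ := hx
      have hk : (H ∘ F)^[k] x = H (F ((H ∘ F)^[k + (p - 1)] x)) := calc
        (H ∘ F)^[k] x = (H ∘ F)^[k + p] x := by rw [Function.iterate_add_apply, hxp.eq]
        _ = (H ∘ F)^[k + (p - 1) + 1] x := by rw [add_assoc, Nat.sub_add_cancel hp]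
        _ = H (F ((H ∘ F)^[k + (p - 1)] x)) := Function.iterate_succ_apply' _ _ _
      exact ⟨k + (p - 1), Or.inr (hH.eq_iff.2 hk)⟩
    · exact ⟨k, Or.inl (hF _)⟩
    · exact ⟨k + 1, Or.inl (Function.iterate_succ_apply' (H ∘ F) k _).symm⟩

end Connectedness

section Noncrossing

variable {α : Type*} [LinearOrder α] {S : Set α} {f g h : α → α}

/-- No two pairs `{i, F i}` and `{j, F j}` cross; singletons may be covered. -/
def IsNoncrossing (F : α → α) : Prop := ∀ ⦃i j⦄, i < j → j < F i → F j ≤ F i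

/-- The partitions encoded by `g` and `h` have the same left legs and the same right legs. -/
structure SameLegs (g h : α → α) : Prop where
  left : ∀ x, x < g x ↔ x < h x
  right : ∀ x, g x < x ↔ h x < x

theorem SameLegs.symm (hgh : SameLegs g h) : SameLegs h g :=
  ⟨fun x => (hgh.left x).symm, fun x => (hgh.right x).symm⟩

theorem SameLegs.trans (hfg : SameLegs f g) (hgh : SameLegs g h) : SameLegs f h :=
  ⟨fun x => (hfg.left x).trans (hgh.left x), fun x => (hfg.right x).trans (hgh.right x)⟩

theorem SameLegs.of_left (hg : IsMatchingOn S g) (hh : IsMatchingOn S h)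
    (hleft : ∀ x, x < g x ↔ x < h x) : SameLegs g h := by
  refine ⟨hleft, fun x => ?_⟩
  by_cases hx : x ∈ S
  · rw [← not_iff_not, not_lt, not_lt, le_iff_lt_or_eq, le_iff_lt_or_eq, hleft,
      or_iff_left (hg.apply_ne hx).symm, or_iff_left (hh.apply_ne hx).symm]
  · rw [hg.apply_of_notMem hx, hh.apply_of_notMem hx]

theorem image_leftLegs_eq_rightLegs (hf : Function.Involutive f) :
    f '' {x | x < f x} = {x | f x < x} := by
  ext x
  constructor
  · rintro ⟨y, hy, rfl⟩
    exact show f (f y) < f y by rwa [hf y]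
  · exact fun hx => ⟨f x, show f x < f (f x) by rwa [hf x], hf x⟩

/-- As `g` has as many left legs as right legs, it has no room for a singleton. -/
theorem SameLegs.of_right (hS : S.Finite) (hg : IsInvolutionOn S g) (hf : IsMatchingOn S f)
    (hright : ∀ x, g x < x ↔ f x < x) : SameLegs g f := by
  have hsub : {x | x < g x} ⊆ {x | x < f x} := fun x hx =>
    (not_lt.1 ((hright x).not.1 hx.not_gt)).lt_of_ne
      (hf.apply_ne (hg.mem_of_apply_ne hx.ne')).symm
  have hcard : {x | x < f x}.ncard ≤ {x | x < g x}.ncard := by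
    rw [← Set.ncard_image_of_injective {x | x < f x} hf.involutive.injective,
      ← Set.ncard_image_of_injective {x | x < g x} hg.involutive.injective,
      image_leftLegs_eq_rightLegs hf.involutive, image_leftLegs_eq_rightLegs hg.involutive]
    simp only [hright, le_refl]
  have hfin : {x | x < f x}.Finite := hS.subset fun x hx => hf.mem_of_apply_ne hx.ne'
  exact ⟨Set.ext_iff.1 (Set.eq_of_subset_of_ncard_le hsub hcard hfin), hright⟩

theorem IsNoncrossing.apply_le_apply (hnc : IsNoncrossing h) (hh : Function.Involutive h) {i j : α}
    (hij : h i < j) (hji : j < i) : h i ≤ h j := by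
  by_contra! hlt
  have hle : h (h i) ≤ h (h j) := hnc hlt (by rwa [hh])
  rw [hh, hh] at hle
  exact hle.not_gt hji

theorem IsNoncrossing.apply_le_of_forall_lt (hnc : IsNoncrossing g) (hg : Function.Involutive g)
    (hh : Function.Involutive h) (hgh : SameLegs g h) {b : α} (hb : h b < b)
    (hlt : ∀ d < b, g d < d → g d = h d) : h b ≤ g b := by
  by_contra! hcb
  have hleft : h b < g (h b) := (hgh.left (h b)).2 (by rwa [hh])
  have hle : g (h b) ≤ b := by simpa only [hg b] using hnc hcb (by rwa [hg])
  have hne : g (h b) ≠ b := fun heq => hcb.ne (hg.eq_iff.1 heq).symm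
  have hd : g (g (h b)) = h (g (h b)) := hlt _ (hle.lt_of_ne hne) (by rwa [hg])
  rw [hg] at hd
  exact hne (hh.injective hd.symm)

/-- A noncrossing partition without covered singletons is determined by its legs: going through
the right legs in increasing order, each is paired with the nearest free left leg. -/
theorem IsNoncrossing.eq_of_sameLegs (hS : S.Finite) (hg : IsInvolutionOn S g)
    (hh : Function.Involutive h) (hgnc : IsNoncrossing g) (hhnc : IsNoncrossing h)
    (hgh : SameLegs g h) : g = h := by
  have hright : ∀ b, g b < b → g b = h b := by
    by_contra! hne
    obtain ⟨b, ⟨hb, hbne⟩, hmin⟩ := Set.exists_min_image {b | g b < b ∧ g b ≠ h b} id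
      (hS.subset fun b hb => hg.mem_of_apply_ne hb.1.ne) hne
    have heq : ∀ d < b, g d < d → g d = h d := fun d hdb hd =>
      by_contra fun hdne => hdb.not_ge (hmin d ⟨hd, hdne⟩)
    refine hbne (le_antisymm ?_ ?_)
    · exact hhnc.apply_le_of_forall_lt hh hg.involutive hgh.symm hb fun d hdb hd =>
        (heq d hdb ((hgh.right d).2 hd)).symm
    · exact hgnc.apply_le_of_forall_lt hg.involutive hh hgh ((hgh.right b).1 hb) heq
  funext x
  rcases lt_trichotomy (g x) x with hx | hx | hx
  · exact hright x hx
  · exact hx.trans (le_antisymm (not_lt.1 ((hgh.right x).not.1 hx.not_lt))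
      (not_lt.1 ((hgh.left x).not.1 hx.not_gt)))
  · have := hright (g x) (by rwa [hg.involutive])
    rw [hg.involutive] at this
    exact hh.eq_iff.1 this.symm

/-- The pairs `{i, h i}` and `{j, h j}` are replaced by `{i, h j}` and `{j, h i}`. -/
def uncross (h : α → α) (i j : α) : α → α := Equiv.swap i j ∘ h ∘ Equiv.swap i j

variable {i j : α}

theorem uncross_apply (hh : Function.Involutive h) (hij : i < j) (hji : j < h i)
    (hhij : h i < h j) (x : α) : uncross h i j x =
      if x = i then h j else if x = j then h i else if x = h i then j else if x = h j then i
      else h x := by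
  simp only [uncross, Function.comp_apply, Equiv.swap_apply_def]
  grind [hh.eq_iff]

theorem IsMatchingOn.uncross (hh : IsMatchingOn S h) (hi : i ∈ S) (hj : j ∈ S) :
    IsMatchingOn S (uncross h i j) := by
  have hmem : ∀ x, Equiv.swap i j x ∈ S ↔ x ∈ S := fun x => by
    rw [Equiv.swap_apply_def]; split_ifs <;> simp_all only
  refine ⟨⟨fun x => ?_, fun x hx => ?_⟩, fun x hx heq => ?_⟩
  · simp only [TypeB.uncross, Function.comp_apply, Equiv.swap_apply_self, hh.involutive _]
  · rw [TypeB.uncross, Function.comp_apply, Function.comp_apply,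
      hh.apply_of_notMem ((hmem x).not.2 hx), Equiv.swap_apply_self]
  · exact hh.apply_ne ((hmem x).2 hx) ((Equiv.swap i j).injective
      (heq.trans (Equiv.swap_apply_self i j x).symm))

theorem IsMatchingOn.sameLegs_uncross (hh : IsMatchingOn S h) (hij : i < j) (hji : j < h i)
    (hhij : h i < h j) : SameLegs (TypeB.uncross h i j) h := by
  have hi : i ∈ S := hh.mem_of_apply_ne (hij.trans hji).ne'
  have hj : j ∈ S := hh.mem_of_apply_ne (hji.trans hhij).ne'
  refine .of_left (hh.uncross hi hj) hh fun x => ?_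
  rw [uncross_apply hh.involutive hij hji hhij]
  grind [hh.involutive i, hh.involutive j]

end Noncrossing

section Existence

variable {S : Set ℤ} {h f : ℤ → ℤ} {i j : ℤ}

theorem sum_sq_uncross_lt {S : Finset ℤ} (hh : IsMatchingOn S h) (hij : i < j) (hji : j < h i)
    (hhij : h i < h j) :
    ∑ x ∈ S, (x + uncross h i j x) ^ 2 < ∑ x ∈ S, (x + h x) ^ 2 := by
  have hmem : ∀ x, h x ≠ x → x ∈ S := fun x hx => hh.mem_of_apply_ne hx
  have hsub : {i, j, h i, h j} ⊆ S := by
    intro x hx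
    simp only [Finset.mem_insert, Finset.mem_singleton] at hx
    refine hmem x ?_
    grind [hh.involutive i, hh.involutive j]
  have hout : ∀ x ∈ S, x ∉ ({i, j, h i, h j} : Finset ℤ) →
      (x + h x) ^ 2 - (x + uncross h i j x) ^ 2 = 0 := by
    intro x _ hx
    simp only [Finset.mem_insert, Finset.mem_singleton] at hx
    rw [uncross_apply hh.involutive hij hji hhij]
    grind
  have hdiff : ∑ x ∈ S, ((x + h x) ^ 2 - (x + uncross h i j x) ^ 2) =
      4 * ((j - i) * (h j - h i)) := by
    rw [← Finset.sum_subset hsub hout]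
    simp only [uncross_apply hh.involutive hij hji hhij]
    have h1 := hh.involutive i
    have h2 := hh.involutive j
    rw [Finset.sum_insert (by grind), Finset.sum_insert (by grind), Finset.sum_insert (by grind),
      Finset.sum_singleton]
    grind
  rw [Finset.sum_sub_distrib] at hdiff
  have hpos : 0 < (j - i) * (h j - h i) := mul_pos (by lia) (by lia)
  lia

/-- Uncrossing two pairs keeps the legs and brings `∑ (x + h x) ^ 2` down, so a minimizer is
noncrossing. -/
theorem IsMatchingOn.exists_isNoncrossing (hS : S.Finite) (hf : IsMatchingOn S f) :
    ∃ h, IsMatchingOn S h ∧ IsNoncrossing h ∧ SameLegs h f := by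
  lift S to Finset ℤ using hS
  obtain ⟨h, ⟨hh, hhf⟩, hmin⟩ :=
    (measure fun h : ℤ → ℤ => (∑ x ∈ S, (x + h x) ^ 2).toNat).wf.has_min
      {h | IsMatchingOn S h ∧ SameLegs h f} ⟨f, hf, ⟨fun _ => .rfl, fun _ => .rfl⟩⟩
  refine ⟨h, hh, ?_, hhf⟩
  by_contra hcross
  simp only [IsNoncrossing, not_forall, not_le] at hcross
  obtain ⟨i, j, hij, hji, hhij⟩ := hcross
  have hi : i ∈ (S : Set ℤ) := hh.mem_of_apply_ne (hij.trans hji).ne'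
  have hj : j ∈ (S : Set ℤ) := hh.mem_of_apply_ne (hji.trans hhij).ne'
  refine hmin (TypeB.uncross h i j)
    ⟨hh.uncross hi hj, (hh.sameLegs_uncross hij hji hhij).trans hhf⟩ ?_
  have hnonneg : 0 ≤ ∑ x ∈ S, (x + TypeB.uncross h i j x) ^ 2 :=
    Finset.sum_nonneg fun x _ => sq_nonneg _
  have := sum_sq_uncross_lt hh hij hji hhij
  exact (Int.toNat_lt_toNat (hnonneg.trans_lt this)).2 this

end Existence

section PartitionsOfIntegers

variable {S : Set ℤ} {F G H : ℤ → ℤ} {π ρ : Set (Set ℤ)} {B C : Set ℤ} {x : ℤ} {m : ℕ}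

theorem IsPartitionOn.eq_of_mem (hρ : IsPartitionOn S ρ) (hB : B ∈ ρ) (hC : C ∈ ρ) (hxB : x ∈ B)
    (hxC : x ∈ C) : B = C :=
  (hρ.2 x ((hρ.1 B hB).1 hxB)).unique ⟨hB, hxB⟩ ⟨hC, hxC⟩

theorem isPartitionOn_blocks (hF : IsInvolutionOn S F) : IsPartitionOn S (blocks S F) := by
  refine ⟨?_, fun x hx => ⟨{x, F x}, ⟨mem_blocks hx, Set.mem_insert _ _⟩, ?_⟩⟩
  · rintro _ ⟨x, hx, rfl⟩
    exact ⟨Set.pair_subset hx (hF.apply_mem hx), Set.insert_nonempty _ _⟩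
  · exact fun B hB => (hF.eq_pair_of_mem_blocks hB.1 hB.2).2

theorem IsMatchingOn.isPairB_of_mem_blocks (hF : IsMatchingOn S F) (hB : B ∈ blocks S F) :
    IsPairB B := by
  obtain ⟨x, hx, rfl⟩ := hB
  exact ⟨x, F x, (hF.apply_ne hx).symm, rfl⟩

theorem ncard_eq_two_mul_ncard_blocks (hS : S.Finite) (hF : IsMatchingOn S F) :
    S.ncard = 2 * (blocks S F).ncard := by
  have hleft : {x | x < F x} ⊆ S := fun x hx => hF.mem_of_apply_ne hx.ne'
  have hright : {x | F x < x} ⊆ S := fun x hx => hF.mem_of_apply_ne hx.ne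
  have hunion : {x | x < F x} ∪ {x | F x < x} = S := Set.Subset.antisymm
    (Set.union_subset hleft hright) fun x hx => (hF.apply_ne hx).symm.lt_or_gt
  have hdisj : Disjoint {x | x < F x} {x | F x < x} :=
    Set.disjoint_left.2 fun x (hx : x < F x) hx' => hx.not_gt hx'
  have hblocks : blocks S F = (fun x => {x, F x}) '' {x | x < F x} := by
    refine Set.Subset.antisymm ?_ (Set.image_mono hleft)
    rintro _ ⟨x, hx, rfl⟩
    rcases (hF.apply_ne hx).symm.lt_or_gt with hlt | hgt
    · exact ⟨x, hlt, rfl⟩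
    · refine ⟨F x, show F x < F (F x) from ?_, ?_⟩
      · rwa [hF.involutive]
      · simp only [hF.involutive x, Set.pair_comm]
  have hinj : Set.InjOn (fun x => ({x, F x} : Set ℤ)) {x | x < F x} := by
    intro x (hx : x < F x) y (hy : y < F y) hxy
    rcases Set.pair_eq_pair_iff.1 hxy with ⟨heq, -⟩ | ⟨rfl, heq⟩
    · exact heq
    · exact absurd (hx.trans_eq heq) hy.not_gt
  rw [← hunion, Set.ncard_union_eq hdisj (hS.subset hleft) (hS.subset hright), hunion, hblocks,
    hinj.ncard_image, ← image_leftLegs_eq_rightLegs hF.involutive,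
    Set.ncard_image_of_injective _ hF.involutive.injective, two_mul]

theorem IsPartitionOn.exists_isInvolutionOn (hρ : IsPartitionOn S ρ)
    (hcard : ∀ B ∈ ρ, IsPairB B ∨ IsSingleB B) : ∃ F, IsInvolutionOn S F ∧ blocks S F = ρ := by
  have hpartner : ∀ x, ∃ y, (x ∈ S → {x, y} ∈ ρ) ∧ (x ∉ S → y = x) := by
    intro x
    by_cases hx : x ∈ S
    · obtain ⟨B, ⟨hB, hxB⟩, -⟩ := hρ.2 x hx
      rcases hcard B hB with ⟨a, b, -, rfl⟩ | ⟨a, rfl⟩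
      · rcases hxB with rfl | rfl
        · exact ⟨b, fun _ => hB, fun hn => absurd hx hn⟩
        · exact ⟨a, fun _ => Set.pair_comm a x ▸ hB, fun hn => absurd hx hn⟩
      · obtain rfl : x = a := hxB
        exact ⟨x, fun _ => (Set.pair_eq_singleton x).symm ▸ hB, fun _ => rfl⟩
    · exact ⟨x, fun hn => absurd hn hx, fun _ => rfl⟩
  choose F hF hFx using hpartner
  refine ⟨F, ⟨fun x => ?_, hFx⟩, Set.Subset.antisymm ?_ fun B hB => ?_⟩
  · by_cases hx : x ∈ S
    · have hFxS : F x ∈ S := (hρ.1 _ (hF x hx)).1 (Or.inr rfl)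
      have heq : {x, F x} = {F x, F (F x)} :=
        hρ.eq_of_mem (hF x hx) (hF _ hFxS) (x := F x) (Or.inr rfl) (Or.inl rfl)
      rcases Set.pair_eq_pair_iff.1 heq with ⟨hx1, hx2⟩ | ⟨hx1, -⟩
      · exact hx2.symm.trans hx1.symm
      · exact hx1.symm
    · rw [hFx x hx, hFx x hx]
  · rintro _ ⟨x, hx, rfl⟩
    exact hF x hx
  · obtain ⟨hBS, x, hxB⟩ := hρ.1 B hB
    exact ⟨x, hBS hxB, hρ.eq_of_mem (hF x (hBS hxB)) hB (Or.inl rfl) hxB⟩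

theorem IsPartitionOn.exists_isMatchingOn (hρ : IsPartitionOn S ρ) (hpair : ∀ B ∈ ρ, IsPairB B) :
    ∃ F, IsMatchingOn S F ∧ blocks S F = ρ := by
  obtain ⟨F, hF, rfl⟩ := hρ.exists_isInvolutionOn fun B hB => Or.inl (hpair B hB)
  refine ⟨F, ⟨hF, fun x hx heq => ?_⟩, rfl⟩
  obtain ⟨a, b, hab, hB⟩ := hpair _ (mem_blocks hx)
  rw [heq, Set.pair_eq_singleton] at hB
  have hsub : ({a, b} : Set ℤ).Subsingleton := hB ▸ Set.subsingleton_singleton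
  exact hab (hsub (Or.inl rfl) (Or.inr rfl))

theorem IsInvolutionOn.eq_of_blocks_eq (hF : IsInvolutionOn S F) (hG : IsInvolutionOn S G)
    (hFG : blocks S F = blocks S G) : F = G := by
  funext x
  by_cases hx : x ∈ S
  · exact (hG.pair_mem_blocks_iff.1 (hFG ▸ mem_blocks hx)).2.symm
  · rw [hF.apply_of_notMem hx, hG.apply_of_notMem hx]

theorem nonCrossing_blocks_iff (hF : IsInvolutionOn S F) :
    NonCrossing (blocks S F) ↔ IsNoncrossing F := by
  constructor
  · intro hnc i j hij hji
    by_contra! hlt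
    have hi : i ∈ S := hF.mem_of_apply_ne (hij.trans hji).ne'
    have hj : j ∈ S := hF.mem_of_apply_ne (hji.trans hlt).ne'
    refine hnc ⟨i, j, F i, F j, {i, F i}, {j, F j}, mem_blocks hi, mem_blocks hj, fun heq => ?_,
      hij, hji, hlt, Or.inl rfl, Or.inr rfl, Or.inl rfl, Or.inr rfl⟩
    have hmem : j ∈ ({i, F i} : Set ℤ) := heq ▸ Or.inl rfl
    exact hmem.elim hij.ne' hji.ne
  · rintro hnc ⟨i, j, k, l, B, C, hB, hC, -, hij, hjk, hkl, hiB, hkB, hjC, hlC⟩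
    obtain ⟨-, rfl⟩ := hF.eq_pair_of_mem_blocks hB hiB
    obtain ⟨-, rfl⟩ := hF.eq_pair_of_mem_blocks hC hjC
    obtain rfl : k = F i := hkB.resolve_left (hij.trans hjk).ne'
    obtain rfl : l = F j := hlC.resolve_left (hjk.trans hkl).ne'
    exact (hnc hij hjk).not_gt hkl

theorem IsInvolutionOn.pair_mem_blocks_iff_of_lt {a b : ℤ} (hF : IsInvolutionOn S F) (hab : a < b) :
    {a, b} ∈ blocks S F ↔ F a = b :=
  hF.pair_mem_blocks_iff.trans
    (and_iff_right_of_imp fun h => hF.mem_of_apply_ne (h.trans_ne hab.ne'))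

theorem leftLegs_blocks (hF : IsInvolutionOn S F) : leftLegs (blocks S F) = {a | a < F a} := by
  ext a
  constructor
  · rintro ⟨b, hab, hB⟩
    exact hab.trans_eq ((hF.pair_mem_blocks_iff_of_lt hab).1 hB).symm
  · exact fun ha => ⟨F a, ha, (hF.pair_mem_blocks_iff_of_lt ha).2 rfl⟩

theorem posRightLegs_blocks (hF : IsInvolutionOn S F) :
    posRightLegs (blocks S F) = {b | |F b| < b} := by
  ext b
  constructor
  · rintro ⟨a, hab, hB, hpos⟩
    obtain rfl : a = F b := hF.involutive.eq_iff.1 ((hF.pair_mem_blocks_iff_of_lt hab).1 hB)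
    exact abs_lt.2 ⟨neg_lt.1 hpos, hab⟩
  · intro (hb : |F b| < b)
    obtain ⟨hneg, hlt⟩ := abs_lt.1 hb
    exact ⟨F b, hlt, (hF.pair_mem_blocks_iff_of_lt hlt).2 (hF.involutive b), neg_lt.1 hneg⟩

theorem negLeftLegs_blocks (hF : IsInvolutionOn S F) :
    negLeftLegs (blocks S F) = {a | a < F a ∧ F a ≤ -a} := by
  ext a
  constructor
  · rintro ⟨b, hab, hB, hneg⟩
    obtain rfl := (hF.pair_mem_blocks_iff_of_lt hab).1 hB
    exact ⟨hab, not_lt.1 hneg⟩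
  · exact fun ha => ⟨F a, ha.1, (hF.pair_mem_blocks_iff_of_lt ha.1).2 rfl, ha.2.not_gt⟩

theorem neg_mem_pmSet : -x ∈ pmSet m ↔ x ∈ pmSet m := by
  change -x ≠ 0 ∧ |-x| ≤ m ↔ x ≠ 0 ∧ |x| ≤ m
  rw [neg_ne_zero, abs_neg]

theorem negSet_pair (a b : ℤ) : negSet {a, b} = {-a, -b} := Set.image_pair _ _ _

theorem forall_negSet_mem_blocks_iff (hF : IsInvolutionOn (pmSet m) F) :
    (∀ B ∈ blocks (pmSet m) F, negSet B ∈ blocks (pmSet m) F) ↔ Function.Odd F := by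
  constructor
  · intro hneg x
    by_cases hx : x ∈ pmSet m
    · have hmem := hneg _ (mem_blocks hx)
      rw [negSet_pair] at hmem
      exact (hF.pair_mem_blocks_iff.1 hmem).2
    · rw [hF.apply_of_notMem hx, hF.apply_of_notMem (neg_mem_pmSet.not.2 hx)]
  · rintro hodd _ ⟨x, hx, rfl⟩
    rw [negSet_pair, hF.pair_mem_blocks_iff]
    exact ⟨neg_mem_pmSet.2 hx, hodd x⟩

end PartitionsOfIntegers

section Components

variable {S : Set ℤ} {F H : ℤ → ℤ} {x : ℤ}

theorem connClass_subset (hF : IsInvolutionOn S F) (hH : IsInvolutionOn S H) (hx : x ∈ S) :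
    connClass F H x ⊆ S := by
  intro y hxy
  induction hxy with
  | refl => exact hx
  | tail _ hstep ih =>
    rcases hstep with rfl | rfl
    · exact hF.apply_mem ih
    · exact hH.apply_mem ih

theorem sUnion_blocks_connClass : ⋃₀ blocks (connClass F H x) F = connClass F H x := by
  refine Set.Subset.antisymm (Set.sUnion_subset ?_) fun y hy => ⟨_, mem_blocks hy, Or.inl rfl⟩
  rintro _ ⟨y, hy, rfl⟩
  exact Set.pair_subset hy (Conn.left hy)

theorem compOf_blocks (hF : IsInvolutionOn S F) (hH : IsInvolutionOn S H) (hx : x ∈ S) :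
    compOf (blocks S F) (blocks S H) {x, F x} = blocks (connClass F H x) F := by
  refine Set.Subset.antisymm (fun B hB => ?_) ?_
  · induction hB with
    | refl => exact mem_blocks .refl
    | tail _ hstep ih =>
      obtain ⟨y, hy, rfl⟩ := ih
      obtain ⟨-, hB, C, hC, ⟨a, haA, haC⟩, b, hbB, hbC⟩ := hstep
      have ha : Conn F H x a := haA.elim (fun h => h ▸ hy) fun h => h ▸ Conn.left hy
      rw [(hH.eq_pair_of_mem_blocks hC haC).2] at hbC
      have hb : Conn F H x b := hbC.elim (fun h => h ▸ ha) fun h => h ▸ ha.right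
      exact (hF.eq_pair_of_mem_blocks hB hbB).2 ▸ mem_blocks hb
  · rintro _ ⟨y, hy, rfl⟩
    induction hy with
    | refl => exact .refl
    | @tail y _ hxy hstep ih =>
      have hyS : y ∈ S := connClass_subset hF hH hx hxy
      rcases hstep with rfl | rfl
      · simpa only [hF.involutive y, Set.pair_comm] using ih
      · exact ih.tail ⟨mem_blocks hyS, mem_blocks (hH.apply_mem hyS), {y, H y}, mem_blocks hyS,
          ⟨y, Or.inl rfl, Or.inl rfl⟩, H y, Or.inl rfl, Or.inr rfl⟩

theorem ncard_compsOf_blocks (hF : IsInvolutionOn S F) (hH : IsInvolutionOn S H)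
    (P : Set ℤ → Prop) :
    {K ∈ CompsOf (blocks S F) (blocks S H) | P (⋃₀ K)}.ncard =
      {Q ∈ connClass F H '' S | P Q}.ncard := by
  have himage : {K ∈ CompsOf (blocks S F) (blocks S H) | P (⋃₀ K)} =
      (fun Q => blocks Q F) '' {Q ∈ connClass F H '' S | P Q} := by
    ext K
    constructor
    · rintro ⟨⟨_, ⟨x, hx, rfl⟩, rfl⟩, hP⟩
      rw [compOf_blocks hF hH hx] at hP ⊢
      rw [sUnion_blocks_connClass] at hP
      exact ⟨_, ⟨⟨x, hx, rfl⟩, hP⟩, rfl⟩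
    · rintro ⟨_, ⟨⟨x, hx, rfl⟩, hP⟩, rfl⟩
      exact ⟨⟨_, mem_blocks hx, (compOf_blocks hF hH hx).symm⟩, sUnion_blocks_connClass.symm ▸ hP⟩
  rw [himage, Set.InjOn.ncard_image]
  rintro _ ⟨⟨x, -, rfl⟩, -⟩ _ ⟨⟨y, -, rfl⟩, -⟩ hxy
  simpa only [sUnion_blocks_connClass] using congrArg Set.sUnion hxy

end Components

section SignedLifts

variable {α : Type*} {S : Set α} {φ : α → α} {y : α}

/-- The sign `e B` of the pair `B = {y, φ y}` containing `y`, and `1` off `S`. -/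
def pairSign (φ : α → α) (e : blocks S φ → ℤˣ) (y : α) : ℤˣ :=
  Function.extend Subtype.val e 1 {y, φ y}

theorem pairSign_eq (e : blocks S φ → ℤˣ) (hy : {y, φ y} ∈ blocks S φ) :
    pairSign φ e y = e ⟨{y, φ y}, hy⟩ :=
  Subtype.val_injective.extend_apply e 1 ⟨{y, φ y}, hy⟩

theorem pairSign_of_notMem (hφ : IsInvolutionOn S φ) (e : blocks S φ → ℤˣ) (hy : y ∉ S) :
    pairSign φ e y = 1 :=
  Function.extend_apply' e (fun _ => 1) _ fun ⟨B, (hB : B.1 = {y, φ y})⟩ =>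
    hy (hφ.pair_mem_blocks_iff.1 (hB ▸ B.2)).1

theorem pairSign_apply (hφ : Function.Involutive φ) (e : blocks S φ → ℤˣ) (y : α) :
    pairSign φ e (φ y) = pairSign φ e y := by
  rw [pairSign, pairSign, hφ, Set.pair_comm]

theorem pairSign_one (y : α) : pairSign φ (1 : blocks S φ → ℤˣ) y = 1 :=
  congrFun (Function.extend_one _) _

theorem pairSign_mul (e e' : blocks S φ → ℤˣ) (y : α) :
    pairSign φ (e * e') y = pairSign φ e y * pairSign φ e' y := by
  have := congrFun (Function.extend_mul (Subtype.val : blocks S φ → Set α) e e' 1 1) {y, φ y}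
  rwa [mul_one] at this

variable {m : ℕ} {f g h : ℤ → ℤ} {x : ℤ}

theorem abs_mem_posInterval : |x| ∈ posInterval m ↔ x ∈ pmSet m :=
  ⟨fun hx => ⟨abs_pos.1 hx.1, hx.2⟩, fun hx => ⟨abs_pos.2 hx.1, hx.2⟩⟩

theorem mem_posInterval_iff_of_pos (hx : 0 < x) : x ∈ posInterval m ↔ x ∈ pmSet m := by
  rw [← abs_mem_posInterval, abs_of_pos hx]

theorem IsInvolutionOn.apply_pos (hf : IsInvolutionOn (posInterval m) f) (hx : 0 < x) :
    0 < f x := by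
  by_cases hxm : x ∈ posInterval m
  · exact (hf.apply_mem hxm).1
  · rwa [hf.apply_of_notMem hxm]

theorem IsInvolutionOn.apply_of_nonpos (hf : IsInvolutionOn (posInterval m) f) (hx : x ≤ 0) :
    f x = x :=
  hf.apply_of_notMem fun hxm => hx.not_gt hxm.1

theorem odd_ext {F G : ℤ → ℤ} (hF : Function.Odd F) (hG : Function.Odd G)
    (hFG : ∀ x, 0 < x → F x = G x) : F = G := by
  funext x
  rcases lt_trichotomy x 0 with hx | rfl | hx
  · rw [← neg_neg x, hF, hG, hFG _ (neg_pos.2 hx)]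
  · rw [hF.map_zero, hG.map_zero]
  · exact hFG x hx

/-- The matching of `[±m]` which covers the matching `f` of `{1, …, m}` through `x ↦ |x|`, and
pairs `x` with a partner of the same sign if and only if `e` is `1` on the pair of `|x|`. -/
def signedLift (f : ℤ → ℤ) (e : blocks (posInterval m) f → ℤˣ) (x : ℤ) : ℤ :=
  x.sign * pairSign f e |x| * f |x|

variable (e : blocks (posInterval m) f → ℤˣ)

theorem signedLift_zero : signedLift f e 0 = 0 := by
  rw [signedLift, Int.sign_zero, zero_mul, zero_mul]

theorem signedLift_odd : Function.Odd (signedLift f e) := fun x => by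
  rw [signedLift, signedLift, abs_neg, Int.sign_neg, neg_mul, neg_mul]

theorem abs_units_mul (s : ℤˣ) (y : ℤ) : |s * y| = |y| := by
  rw [abs_mul, Int.isUnit_iff_abs_eq.1 s.isUnit, one_mul]

theorem signedLift_units_mul (s : ℤˣ) {y : ℤ} (hy : 0 < y) :
    signedLift f e (s * y) = ↑(s * pairSign f e y) * f y := by
  rw [signedLift, abs_units_mul, abs_of_pos hy, Units.val_mul]
  rcases Int.units_eq_one_or s with rfl | rfl
  · rw [Units.val_one, one_mul, Int.sign_eq_one_of_pos hy]
  · rw [Units.val_neg, Units.val_one, neg_one_mul, Int.sign_neg, Int.sign_eq_one_of_pos hy]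

theorem signedLift_of_pos (hx : 0 < x) : signedLift f e x = pairSign f e x * f x := by
  simpa only [Units.val_one, one_mul] using signedLift_units_mul e 1 hx

theorem exists_units_mul_pos (hx : x ≠ 0) : ∃ s : ℤˣ, ∃ y > 0, x = s * y := by
  rcases hx.lt_or_gt with hneg | hpos
  · exact ⟨-1, -x, neg_pos.2 hneg, by rw [Units.val_neg, Units.val_one, neg_one_mul, neg_neg]⟩
  · exact ⟨1, x, hpos, by rw [Units.val_one, one_mul]⟩

theorem signedLift_one_of_pos (hx : 0 < x) :
    signedLift f (1 : blocks (posInterval m) f → ℤˣ) x = f x := by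
  rw [signedLift_of_pos 1 hx, pairSign_one, Units.val_one, one_mul]

theorem IsInvolutionOn.abs_signedLift (hf : IsInvolutionOn (posInterval m) f) (x : ℤ) :
    |signedLift f e x| = f |x| := by
  rcases eq_or_ne x 0 with rfl | hx
  · rw [signedLift_zero, abs_zero, hf.apply_of_nonpos le_rfl]
  · obtain ⟨s, y, hy, rfl⟩ := exists_units_mul_pos hx
    rw [signedLift_units_mul e s hy, abs_units_mul, abs_units_mul, abs_of_pos hy,
      abs_of_pos (hf.apply_pos hy)]

theorem IsMatchingOn.signedLift (hf : IsMatchingOn (posInterval m) f) :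
    IsMatchingOn (pmSet m) (signedLift f e) := by
  refine ⟨⟨fun x => ?_, fun x hx => ?_⟩, fun x hx heq => ?_⟩
  · rcases eq_or_ne x 0 with rfl | hx
    · rw [signedLift_zero, signedLift_zero]
    · obtain ⟨s, y, hy, rfl⟩ := exists_units_mul_pos hx
      rw [signedLift_units_mul e s hy, signedLift_units_mul e _ (hf.apply_pos hy),
        pairSign_apply hf.involutive, mul_assoc, Int.units_mul_self, mul_one, hf.involutive]
  · have hxm : |x| ∉ posInterval m := abs_mem_posInterval.not.2 hx
    rw [TypeB.signedLift, pairSign_of_notMem hf.toIsInvolutionOn e hxm, hf.apply_of_notMem hxm,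
      Units.val_one, mul_one, Int.sign_mul_abs]
  · refine hf.apply_ne (abs_mem_posInterval.2 hx) ?_
    rw [← hf.abs_signedLift e, heq]

end SignedLifts

section AssociatedNoncrossing

variable {m : ℕ} {f g h : ℤ → ℤ}

theorem finite_posInterval : (posInterval m).Finite := Set.finite_Icc 1 (m : ℤ)

theorem hat2Of_blocks (hf : IsMatchingOn (posInterval m) f) (hh : IsMatchingOn (posInterval m) h)
    (hnc : IsNoncrossing h) (hhf : SameLegs h f) :
    hat2Of m (blocks (posInterval m) f) = blocks (posInterval m) h := by
  have hex : ∃ ρ, Hat2Props m (blocks (posInterval m) f) ρ := by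
    refine ⟨_, ⟨isPartitionOn_blocks hh.toIsInvolutionOn, fun B => hh.isPairB_of_mem_blocks⟩,
      (nonCrossing_blocks_iff hh.toIsInvolutionOn).2 hnc, ?_⟩
    simp only [leftLegs_blocks hh.toIsInvolutionOn, leftLegs_blocks hf.toIsInvolutionOn, hhf.left]
  rw [hat2Of, dif_pos hex]
  obtain ⟨⟨hpart, hpair⟩, hρnc, hlegs⟩ := hex.choose_spec
  obtain ⟨g, hg, hgρ⟩ := hpart.exists_isMatchingOn hpair
  rw [← hgρ] at hρnc hlegs ⊢
  rw [leftLegs_blocks hg.toIsInvolutionOn, leftLegs_blocks hf.toIsInvolutionOn] at hlegs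
  have hgf : SameLegs g f := .of_left hg hf (Set.ext_iff.1 hlegs)
  rw [IsNoncrossing.eq_of_sameLegs finite_posInterval hg.toIsInvolutionOn hh.involutive
    ((nonCrossing_blocks_iff hg.toIsInvolutionOn).1 hρnc) hnc (hgf.trans hhf.symm)]

theorem posRightLegs_blocks_signedLift (hf : IsMatchingOn (posInterval m) f)
    (e : blocks (posInterval m) f → ℤˣ) :
    posRightLegs (blocks (pmSet m) (signedLift f e)) = {b | f b < b} := by
  rw [posRightLegs_blocks (hf.signedLift e).toIsInvolutionOn]
  ext b
  change |signedLift f e b| < b ↔ f b < b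
  rcases lt_or_ge 0 b with hb | hb
  · rw [hf.abs_signedLift e, abs_of_pos hb]
  · rw [hf.apply_of_nonpos hb]
    exact iff_of_false (hb.trans (abs_nonneg _)).not_gt (lt_irrefl b)

theorem negLeftLegs_blocks_signedLift (hf : IsMatchingOn (posInterval m) f)
    (e : blocks (posInterval m) f → ℤˣ) :
    negLeftLegs (blocks (pmSet m) (signedLift f e)) = {a | f (-a) < -a} := by
  rw [negLeftLegs_blocks (hf.signedLift e).toIsInvolutionOn]
  ext a
  change a < signedLift f e a ∧ signedLift f e a ≤ -a ↔ f (-a) < -a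
  have habs := hf.abs_signedLift e a
  rcases lt_or_ge a 0 with ha | ha
  · rw [abs_of_neg ha] at habs
    rw [← habs, abs_lt, neg_neg]
    refine and_congr_right fun hlt => ⟨fun hle => hle.lt_of_ne fun heq => ?_, le_of_lt⟩
    have ham : a ∈ pmSet m := (hf.signedLift e).mem_of_apply_ne hlt.ne'
    rw [heq, abs_neg, abs_of_neg ha] at habs
    exact hf.apply_ne (abs_mem_posInterval.2 ham) (by rw [abs_of_neg ha, ← habs])
  · rw [hf.apply_of_nonpos (neg_nonpos.2 ha)]
    exact iff_of_false (fun hlt => (hlt.1.trans_le hlt.2).not_ge (neg_le_self ha)) (lt_irrefl _)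

theorem signedLift_one_of_neg {x : ℤ} (hx : x < 0) :
    signedLift h (1 : blocks (posInterval m) h → ℤˣ) x = -h (-x) := by
  rw [← signedLift_one_of_pos (f := h) (m := m) (neg_pos.2 hx), signedLift_odd, neg_neg]

theorem IsInvolutionOn.signedLift_one_pos_iff (hh : IsInvolutionOn (posInterval m) h) (x : ℤ) :
    0 < signedLift h (1 : blocks (posInterval m) h → ℤˣ) x ↔ 0 < x := by
  rcases lt_trichotomy x 0 with hx | rfl | hx
  · rw [signedLift_one_of_neg hx]
    exact iff_of_false (neg_neg_of_pos (hh.apply_pos (neg_pos.2 hx))).not_gt hx.not_gt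
  · rw [signedLift_zero]
  · rw [signedLift_one_of_pos hx]
    exact iff_of_true (hh.apply_pos hx) hx

theorem IsInvolutionOn.signedLift_one_neg_iff (hh : IsInvolutionOn (posInterval m) h) (x : ℤ) :
    signedLift h (1 : blocks (posInterval m) h → ℤˣ) x < 0 ↔ x < 0 := by
  rw [← neg_pos, ← signedLift_odd, hh.signedLift_one_pos_iff, neg_pos]

theorem IsNoncrossing.signedLift_one (hnc : IsNoncrossing h)
    (hh : IsInvolutionOn (posInterval m) h) :
    IsNoncrossing (signedLift h (1 : blocks (posInterval m) h → ℤˣ)) := by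
  intro i j hij hji
  rcases lt_trichotomy i 0 with hi | rfl | hi
  · have hj : j < 0 := hji.trans ((hh.signedLift_one_neg_iff i).2 hi)
    rw [signedLift_one_of_neg hi] at hji ⊢
    rw [signedLift_one_of_neg hj]
    exact neg_le_neg (hnc.apply_le_apply hh.involutive (lt_neg_of_lt_neg hji) (neg_lt_neg hij))
  · exact absurd hji (by rw [signedLift_zero]; exact hij.not_gt)
  · rw [signedLift_one_of_pos hi] at hji ⊢
    rw [signedLift_one_of_pos (hi.trans hij)]
    exact hnc hij hji

theorem hatProps_blocks_signedLift (hf : IsMatchingOn (posInterval m) f)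
    (hh : IsMatchingOn (posInterval m) h) (hnc : IsNoncrossing h) (hhf : SameLegs h f)
    (e : blocks (posInterval m) f → ℤˣ) :
    HatProps m (blocks (pmSet m) (signedLift f e))
      (blocks (pmSet m) (signedLift h (1 : blocks (posInterval m) h → ℤˣ))) := by
  have hH := hh.signedLift 1
  refine ⟨isPartitionOn_blocks hH.toIsInvolutionOn,
    fun B hB => Or.inl (hH.isPairB_of_mem_blocks hB),
    (nonCrossing_blocks_iff hH.toIsInvolutionOn).2 (hnc.signedLift_one hh.toIsInvolutionOn),
    (forall_negSet_mem_blocks_iff hH.toIsInvolutionOn).2 (signedLift_odd 1), ?_, ?_, ?_, ?_⟩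
  · rintro _ ⟨x, hx, rfl⟩
    rcases hx.1.lt_or_gt with hneg | hpos
    · refine Or.inr fun y hy => ?_
      rcases hy with rfl | rfl
      · exact hneg
      · exact (hh.signedLift_one_neg_iff x).2 hneg
    · refine Or.inl fun y hy => ?_
      rcases hy with rfl | rfl
      · exact hpos
      · exact (hh.signedLift_one_pos_iff x).2 hpos
  · simp only [posRightLegs_blocks_signedLift hh, posRightLegs_blocks_signedLift hf, hhf.right]
  · simp only [negLeftLegs_blocks_signedLift hh, negLeftLegs_blocks_signedLift hf, hhf.right]
  · rintro ⟨a, b, c, -, -, -, hc⟩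
    obtain ⟨y, z, hyz, heq⟩ := hH.isPairB_of_mem_blocks hc
    have hsub : ({y, z} : Set ℤ).Subsingleton := heq ▸ Set.subsingleton_singleton
    exact hyz (hsub (Or.inl rfl) (Or.inr rfl))

/-- The restriction of `G` to the positive integers, extended by the identity. -/
def positivePart (G : ℤ → ℤ) (x : ℤ) : ℤ := if 0 < x then G x else x

theorem positivePart_of_pos {G : ℤ → ℤ} {x : ℤ} (hx : 0 < x) : positivePart G x = G x := if_pos hx

theorem positivePart_of_nonpos {G : ℤ → ℤ} {x : ℤ} (hx : x ≤ 0) : positivePart G x = x :=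
  if_neg hx.not_gt

theorem IsInvolutionOn.positivePart {G : ℤ → ℤ} (hG : IsInvolutionOn (pmSet m) G)
    (hpos : ∀ x, 0 < x → 0 < G x) : IsInvolutionOn (posInterval m) (positivePart G) := by
  refine ⟨fun x => ?_, fun x hx => ?_⟩ <;> rcases lt_or_ge 0 x with hx0 | hx0
  · rw [positivePart_of_pos hx0, positivePart_of_pos (hpos x hx0), hG.involutive]
  · rw [positivePart_of_nonpos hx0, positivePart_of_nonpos hx0]
  · rw [positivePart_of_pos hx0]
    exact hG.apply_of_notMem ((mem_posInterval_iff_of_pos hx0).not.1 hx)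
  · exact positivePart_of_nonpos hx0

theorem IsNoncrossing.positivePart {G : ℤ → ℤ} (hG : IsNoncrossing G) :
    IsNoncrossing (positivePart G) := by
  intro i j hij hji
  rcases lt_or_ge 0 i with hi | hi
  · rw [positivePart_of_pos hi] at hji ⊢
    rw [positivePart_of_pos (hi.trans hij)]
    exact hG hij hji
  · rw [positivePart_of_nonpos hi] at hji
    exact absurd hji hij.not_gt

theorem HatProps.eq_blocks_signedLift (hf : IsMatchingOn (posInterval m) f)
    (hh : IsMatchingOn (posInterval m) h) (hnc : IsNoncrossing h) (hhf : SameLegs h f)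
    {e : blocks (posInterval m) f → ℤˣ} {ρ : Set (Set ℤ)}
    (hρ : HatProps m (blocks (pmSet m) (signedLift f e)) ρ) :
    ρ = blocks (pmSet m) (signedLift h (1 : blocks (posInterval m) h → ℤˣ)) := by
  obtain ⟨hpart, hcard, hρnc, hneg, hsign, hright, -, -⟩ := hρ
  obtain ⟨G, hG, rfl⟩ := hpart.exists_isInvolutionOn hcard
  have hodd : Function.Odd G := (forall_negSet_mem_blocks_iff hG).1 hneg
  have hGpos : ∀ x, 0 < x → 0 < G x := by
    intro x hx
    by_cases hxm : x ∈ pmSet m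
    · rcases hsign _ (mem_blocks hxm) with hB | hB
      · exact hB _ (Or.inr rfl)
      · exact absurd (hB x (Or.inl rfl)) hx.not_gt
    · rwa [hG.apply_of_notMem hxm]
  have hg := hG.positivePart hGpos
  have hgright : ∀ x, positivePart G x < x ↔ f x < x := by
    intro x
    rcases lt_or_ge 0 x with hx | hx
    · rw [posRightLegs_blocks_signedLift hf, posRightLegs_blocks hG] at hright
      have hxright : |G x| < x ↔ f x < x := Set.ext_iff.1 hright x
      rwa [abs_of_pos (hGpos x hx), ← positivePart_of_pos (G := G) hx] at hxright
    · rw [positivePart_of_nonpos hx, hf.apply_of_nonpos hx]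
  have hgh : positivePart G = h := IsNoncrossing.eq_of_sameLegs finite_posInterval hg
    hh.involutive ((nonCrossing_blocks_iff hG).1 hρnc).positivePart hnc
    ((SameLegs.of_right finite_posInterval hg hf hgright).trans hhf.symm)
  rw [odd_ext hodd (signedLift_odd (f := h) (m := m) 1) fun x hx => by
    rw [signedLift_one_of_pos hx, ← hgh, positivePart_of_pos hx]]

theorem hatOf_blocks_signedLift (hf : IsMatchingOn (posInterval m) f)
    (hh : IsMatchingOn (posInterval m) h) (hnc : IsNoncrossing h) (hhf : SameLegs h f)
    (e : blocks (posInterval m) f → ℤˣ) :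
    hatOf m (blocks (pmSet m) (signedLift f e)) =
      blocks (pmSet m) (signedLift h (1 : blocks (posInterval m) h → ℤˣ)) := by
  have hex : ∃ ρ, HatProps m (blocks (pmSet m) (signedLift f e)) ρ :=
    ⟨_, hatProps_blocks_signedLift hf hh hnc hhf e⟩
  rw [hatOf, dif_pos hex]
  exact hex.choose_spec.eq_blocks_signedLift hf hh hnc hhf

end AssociatedNoncrossing

section Fiber

variable {m n : ℕ} {f G : ℤ → ℤ}

theorem pmap_blocks (hfG : ∀ x, |G x| = f |x|) :
    Pmap (blocks (pmSet m) G) = blocks (posInterval m) f := by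
  have himage : ∀ x, (fun y : ℤ => |y|) '' {x, G x} = {|x|, f |x|} := fun x => by
    rw [Set.image_pair, hfG]
  ext B
  constructor
  · rintro ⟨_, ⟨x, hx, rfl⟩, rfl⟩
    exact himage x ▸ mem_blocks (abs_mem_posInterval.2 hx)
  · rintro ⟨y, hy, rfl⟩
    have hyabs : |y| = y := abs_of_pos hy.1
    refine ⟨{y, G y}, mem_blocks (abs_mem_posInterval.1 (hyabs.symm ▸ hy)), ?_⟩
    rw [himage, hyabs]

theorem p2sym_blocks_iff (hG : IsMatchingOn (pmSet (2 * n)) G) :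
    P2sym n (blocks (pmSet (2 * n)) G) ↔
      Function.Odd G ∧ ∀ x ∈ pmSet (2 * n), G x ≠ -x := by
  rw [P2sym, and_iff_right (isPartitionOn_blocks hG.toIsInvolutionOn),
    and_iff_right fun B => hG.isPairB_of_mem_blocks,
    forall_negSet_mem_blocks_iff hG.toIsInvolutionOn, blocks, Set.forall_mem_image]
  refine and_congr_right fun _ => forall₂_congr fun x hx => not_congr ?_
  rw [negSet_pair, Set.pair_eq_pair_iff]
  have hx0 : x ≠ 0 := hx.1
  constructor
  · rintro (⟨hxx, -⟩ | ⟨hxx, -⟩)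
    · exact absurd (self_eq_neg.1 hxx.symm) hx0
    · exact hxx.symm
  · exact fun hxx => Or.inr ⟨hxx.symm, by rw [hxx, neg_neg]⟩

theorem p2sym_blocks_signedLift (hf : IsMatchingOn (posInterval (2 * n)) f)
    (e : blocks (posInterval (2 * n)) f → ℤˣ) :
    P2sym n (blocks (pmSet (2 * n)) (signedLift f e)) := by
  refine (p2sym_blocks_iff (hf.signedLift e)).2 ⟨signedLift_odd e, fun x hx heq => ?_⟩
  refine hf.apply_ne (abs_mem_posInterval.2 hx) ?_
  rw [← hf.abs_signedLift e, heq, abs_neg]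

theorem abs_apply_of_pmap_blocks (hf : IsInvolutionOn (posInterval m) f)
    (hG : IsInvolutionOn (pmSet m) G)
    (hPmap : Pmap (blocks (pmSet m) G) = blocks (posInterval m) f) (x : ℤ) :
    |G x| = f |x| := by
  by_cases hx : x ∈ pmSet m
  · have hB : {|x|, |G x|} ∈ blocks (posInterval m) f :=
      hPmap ▸ ⟨_, mem_blocks hx, (Set.image_pair _ _ _).symm⟩
    exact (hf.pair_mem_blocks_iff.1 hB).2.symm
  · rw [hG.apply_of_notMem hx, hf.apply_of_notMem (abs_mem_posInterval.not.2 hx)]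

open Classical in
theorem exists_signedLift_eq (hf : IsInvolutionOn (posInterval m) f)
    (hG : IsInvolutionOn (pmSet m) G) (hodd : Function.Odd G) (hfG : ∀ x, |G x| = f |x|) :
    ∃ e : blocks (posInterval m) f → ℤˣ, signedLift f e = G := by
  let e (B : blocks (posInterval m) f) : ℤˣ := if B.1 ∈ blocks (pmSet m) G then 1 else -1
  refine ⟨e, odd_ext (signedLift_odd e) hodd fun y hy => ?_⟩
  rw [signedLift_of_pos e hy]
  by_cases hym : y ∈ posInterval m
  · have hypm : y ∈ pmSet m := (mem_posInterval_iff_of_pos hy).1 hym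
    rw [pairSign_eq e (mem_blocks hym)]
    by_cases hB : {y, f y} ∈ blocks (pmSet m) G
    · have he : e ⟨{y, f y}, mem_blocks hym⟩ = 1 := if_pos hB
      rw [he, Units.val_one, one_mul, (hG.pair_mem_blocks_iff.1 hB).2]
    · have he : e ⟨{y, f y}, mem_blocks hym⟩ = -1 := if_neg hB
      have hne : G y ≠ f y := fun heq => hB (hG.pair_mem_blocks_iff.2 ⟨hypm, heq⟩)
      have habs : |G y| = f y := by rw [hfG, abs_of_pos hy]
      rw [he, Units.val_neg, Units.val_one, neg_one_mul]
      exact (((abs_eq (hf.apply_pos hy).le).1 habs).resolve_left hne).symm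
  · rw [pairSign_of_notMem hf e hym, hf.apply_of_notMem hym, Units.val_one, one_mul,
      hG.apply_of_notMem ((mem_posInterval_iff_of_pos hy).not.1 hym)]

theorem signedLift_injective (hf : IsInvolutionOn (posInterval m) f) :
    Function.Injective (signedLift f : (blocks (posInterval m) f → ℤˣ) → ℤ → ℤ) := by
  rintro e e' heq
  funext ⟨_, y, hy, rfl⟩
  have hey := congrFun heq y
  rw [signedLift_of_pos e hy.1, signedLift_of_pos e' hy.1, pairSign_eq e (mem_blocks hy),
    pairSign_eq e' (mem_blocks hy)] at hey
  exact Units.ext (mul_right_cancel₀ (hf.apply_pos hy.1).ne' hey)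

theorem fiber_eq_range (hf : IsMatchingOn (posInterval (2 * n)) f) :
    {σ : Set (Set ℤ) | P2sym n σ ∧ Pmap σ = blocks (posInterval (2 * n)) f} =
      Set.range fun e : blocks (posInterval (2 * n)) f → ℤˣ =>
        blocks (pmSet (2 * n)) (signedLift f e) := by
  refine Set.Subset.antisymm ?_ (Set.range_subset_iff.2 fun e =>
    ⟨p2sym_blocks_signedLift hf e, pmap_blocks (hf.abs_signedLift e)⟩)
  rintro σ ⟨hσ, hPmap⟩
  obtain ⟨G, hG, rfl⟩ := hσ.1.exists_isMatchingOn hσ.2.1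
  obtain ⟨e, rfl⟩ := exists_signedLift_eq hf.toIsInvolutionOn hG.toIsInvolutionOn
    ((p2sym_blocks_iff hG).1 hσ).1
    (abs_apply_of_pmap_blocks hf.toIsInvolutionOn hG.toIsInvolutionOn hPmap)
  exact ⟨e, rfl⟩

theorem blocks_signedLift_injective (hf : IsMatchingOn (posInterval m) f) :
    Function.Injective fun e : blocks (posInterval m) f → ℤˣ =>
      blocks (pmSet m) (signedLift f e) := fun e e' heq =>
  signedLift_injective hf.toIsInvolutionOn ((hf.signedLift e).toIsInvolutionOn.eq_of_blocks_eq
    (hf.signedLift e').toIsInvolutionOn heq)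

theorem card_blocks (hf : IsMatchingOn (posInterval (2 * n)) f) :
    (blocks (posInterval (2 * n)) f).ncard = n := by
  have hcard := ncard_eq_two_mul_ncard_blocks finite_posInterval hf
  have hposInterval : (posInterval (2 * n)).ncard = 2 * n := by
    change (Set.Icc 1 ((2 * n : ℕ) : ℤ)).ncard = 2 * n
    rw [← Finset.coe_Icc, Set.ncard_coe_finset, Int.card_Icc, add_sub_cancel_right,
      Int.toNat_natCast]
  lia

end Fiber

section Holonomy

variable {α : Type*} {S R : Set α} {φ χ : α → α} {u : α}

/-- The product of the signs of the pairs in the cycle of `u`; each of these pairs contains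
exactly one point of the orbit of `u` under `χ ∘ φ`. -/
def holonomy (φ χ : α → α) (e : blocks S φ → ℤˣ) (u : α) : ℤˣ :=
  ∏ i ∈ Finset.range (Function.minimalPeriod (χ ∘ φ) u), pairSign φ e ((χ ∘ φ)^[i] u)

/-- The holonomies along the cycles of the points of `R`, as a function of the signs. -/
def holonomyHom (φ χ : α → α) (S R : Set α) : (blocks S φ → ℤˣ) →* (R → ℤˣ) :=
  MonoidHom.mk' (fun e u => holonomy φ χ e u) fun e e' => funext fun u => by
    simp only [holonomy, pairSign_mul, Finset.prod_mul_distrib, Pi.mul_apply]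

theorem holonomyHom_surjective (hS : S.Finite) (hφ : IsMatchingOn S φ) (hχ : IsMatchingOn S χ)
    (hRS : R ⊆ S) (hR : R.InjOn (connClass φ χ)) :
    Function.Surjective (holonomyHom φ χ S R) := by
  have huniq : ∀ u ∈ R, ∀ v ∈ R, Conn φ χ u v → u = v := fun u hu v hv huv =>
    hR hu hv ((connClass_eq_iff hφ.involutive hχ.involutive).2 huv)
  let pairOf (u : R) : blocks S φ := ⟨{u.1, φ u}, mem_blocks (hRS u.2)⟩
  have hpair : ∀ (u v : R) (i : ℕ),
      ({(χ ∘ φ)^[i] u.1, φ ((χ ∘ φ)^[i] u.1)} : Set α) = {v.1, φ v} → (χ ∘ φ)^[i] u.1 = u := by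
    intro u v i heq
    have hconn : Conn φ χ u.1 ((χ ∘ φ)^[i] u.1) := .iterate_comp i
    rcases Set.pair_eq_pair_iff.1 heq with ⟨heq, -⟩ | ⟨-, heq⟩
    · rw [heq, huniq u u.2 v v.2 (heq ▸ hconn)]
    · obtain rfl : u = v := Subtype.ext (huniq u u.2 v v.2 (heq ▸ hconn.left))
      exact absurd (hφ.involutive.eq_iff.1 heq)
        (hφ.iterate_comp_ne_apply hχ i (hRS u.2))
  have hinj : Function.Injective pairOf := by
    intro u v huv
    rcases Set.pair_eq_pair_iff.1 (congrArg Subtype.val huv) with ⟨heq, -⟩ | ⟨-, heq⟩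
    · exact Subtype.ext heq
    · exact Subtype.ext (huniq u u.2 v v.2 (heq ▸ Conn.left .refl))
  intro t
  refine ⟨Function.extend pairOf t fun _ => 1, funext fun u => ?_⟩
  have hper : u.1 ∈ Function.periodicPts (χ ∘ φ) :=
    hφ.mem_periodicPts_comp hS hχ.toIsInvolutionOn (hRS u.2)
  change holonomy φ χ _ u.1 = t u
  rw [holonomy, Finset.prod_eq_single 0]
  · rw [Function.iterate_zero_apply, pairSign_eq _ (mem_blocks (hRS u.2))]
    exact hinj.extend_apply t _ u
  · intro i hi hi0
    have hiS : (χ ∘ φ)^[i] u.1 ∈ S :=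
      hφ.iterate_comp_mem hχ.toIsInvolutionOn (hRS u.2) i
    rw [pairSign_eq _ (mem_blocks hiS)]
    refine Function.extend_apply' t _ _ fun ⟨v, hv⟩ => ?_
    exact Function.not_isPeriodicPt_of_pos_of_lt_minimalPeriod hi0 (Finset.mem_range.1 hi)
      (hpair u v i (congrArg Subtype.val hv).symm)
  · exact fun h0 =>
      absurd (Finset.mem_range.2 (Function.minimalPeriod_pos_of_mem_periodicPts hper)) h0

end Holonomy

section SignCounting

variable {ι κ G H M : Type*} [CommSemiring M]

theorem sum_pow_card_neg_one [Fintype κ] [DecidableEq κ] (q : M) :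
    ∑ t : κ → ℤˣ, q ^ Nat.card {k // t k = -1} = (1 + q) ^ Nat.card κ := by
  have hfactor : ∑ s : ℤˣ, (if s = -1 then q else 1) = 1 + q := by
    rw [show (Finset.univ : Finset ℤˣ) = {1, -1} from rfl, Finset.sum_pair (by decide),
      if_neg (by decide), if_pos rfl]
  calc ∑ t : κ → ℤˣ, q ^ Nat.card {k // t k = -1}
      = ∑ t : κ → ℤˣ, ∏ k, if t k = -1 then q else 1 := by
        refine Finset.sum_congr rfl fun t _ => ?_
        rw [Finset.prod_ite, Finset.prod_const, Finset.prod_const_one, mul_one,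
          Nat.card_eq_fintype_card, Fintype.card_subtype]
    _ = ∏ _k : κ, ∑ s : ℤˣ, if s = -1 then q else 1 := by
        rw [Finset.prod_univ_sum, Fintype.piFinset_univ]
    _ = (1 + q) ^ Nat.card κ := by
        rw [hfactor, Finset.prod_const, Finset.card_univ, Nat.card_eq_fintype_card]

theorem sum_comp_of_surjective [Group G] [Group H] [Fintype G] [Fintype H] (φ : G →* H)
    (hφ : Function.Surjective φ) (w : H → M) :
    ∑ g, w (φ g) = Nat.card φ.ker * ∑ h, w h := by
  classical
  have hfiber (h : H) : ∑ g with φ g = h, w (φ g) = Nat.card φ.ker * w h := by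
    rw [Finset.sum_congr rfl fun g hg => congrArg w (Finset.mem_filter.1 hg).2,
      Finset.sum_const, nsmul_eq_mul,
      MonoidHom.card_fiber_eq_of_mem_range φ (hφ h) ⟨1, map_one φ⟩, Nat.card_eq_fintype_card,
      Fintype.card_subtype]
    simp only [MonoidHom.mem_ker]
  rw [← Finset.sum_fiberwise Finset.univ φ, Finset.sum_congr rfl fun h _ => hfiber h,
    Finset.mul_sum]

theorem card_ker_of_surjective_units [Finite ι] [Finite κ] (φ : (ι → ℤˣ) →* (κ → ℤˣ))
    (hφ : Function.Surjective φ) : Nat.card φ.ker = 2 ^ (Nat.card ι - Nat.card κ) := by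
  have hunits : Nat.card ℤˣ = 2 := by rw [Nat.card_eq_fintype_card, Fintype.card_units_int]
  have hcard : Nat.card φ.ker * 2 ^ Nat.card κ = 2 ^ Nat.card ι := by
    rw [← hunits, ← Nat.card_fun, ← Nat.card_fun, ← φ.ker.card_mul_index, Subgroup.index_ker,
      MonoidHom.range_eq_top.2 hφ, Subgroup.card_top]
  have hle : Nat.card κ ≤ Nat.card ι :=
    (Nat.pow_dvd_pow_iff_le_right one_lt_two).1 (Dvd.intro_left _ hcard)
  refine Nat.eq_of_mul_eq_mul_right (pow_pos two_pos (Nat.card κ)) ?_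
  rw [hcard, pow_sub_mul_pow 2 hle]

end SignCounting

section CycleLifts

variable {m : ℕ} {f h : ℤ → ℤ} {u : ℤ} (e : blocks (posInterval m) f → ℤˣ)

theorem finite_pmSet : (pmSet m).Finite :=
  (Set.finite_Icc (-m : ℤ) m).subset fun _ hx => abs_le.1 hx.2

theorem iterate_comp_pos (hf : IsInvolutionOn (posInterval m) f)
    (hh : IsInvolutionOn (posInterval m) h) (hu : 0 < u) (k : ℕ) : 0 < (h ∘ f)^[k] u :=
  Set.MapsTo.iterate (f := h ∘ f) (s := Set.Ioi 0)
    (fun _ hy => hh.apply_pos (hf.apply_pos hy)) k hu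

theorem iterate_signedLift_comp (hf : IsInvolutionOn (posInterval m) f)
    (hh : IsInvolutionOn (posInterval m) h) (hu : 0 < u) (k : ℕ) :
    (signedLift h (1 : blocks (posInterval m) h → ℤˣ) ∘ signedLift f e)^[k] u =
      ↑(∏ i ∈ Finset.range k, pairSign f e ((h ∘ f)^[i] u)) * (h ∘ f)^[k] u := by
  induction k with
  | zero => rw [Finset.prod_range_zero, Units.val_one, one_mul]; rfl
  | succ k ih =>
    have hpos := iterate_comp_pos hf hh hu k
    rw [Function.iterate_succ_apply', Function.iterate_succ_apply', ih, Function.comp_apply,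
      Function.comp_apply, signedLift_units_mul e _ hpos,
      signedLift_units_mul 1 _ (hf.apply_pos hpos), pairSign_one, mul_one,
      Finset.prod_range_succ]

theorem abs_iterate_signedLift_comp (hf : IsInvolutionOn (posInterval m) f)
    (hh : IsInvolutionOn (posInterval m) h) (x : ℤ) (k : ℕ) :
    |(signedLift h (1 : blocks (posInterval m) h → ℤˣ) ∘ signedLift f e)^[k] x| =
      (h ∘ f)^[k] |x| :=
  Function.Semiconj.iterate_right (f := abs) (fun y => by
    rw [Function.comp_apply, hh.abs_signedLift, hf.abs_signedLift, Function.comp_apply]) k x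

theorem conn_neg_iff (hf : IsMatchingOn (posInterval m) f) (hh : IsMatchingOn (posInterval m) h)
    (hu : u ∈ posInterval m) :
    Conn (signedLift f e) (signedLift h (1 : blocks (posInterval m) h → ℤˣ)) u (-u) ↔
      holonomy f h e u = -1 := by
  have hF := hf.signedLift e
  have hH := hh.signedLift (1 : blocks (posInterval m) h → ℤˣ)
  have hperiod := iterate_signedLift_comp e hf.toIsInvolutionOn hh.toIsInvolutionOn hu.1
    (Function.minimalPeriod (h ∘ f) u)
  rw [Function.iterate_minimalPeriod] at hperiod
  change _ = ↑(holonomy f h e u) * u at hperiod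
  refine ⟨fun hconn => (Int.units_eq_one_or _).resolve_left fun hone => ?_, fun hneg => ?_⟩
  · rw [hone, Units.val_one, one_mul] at hperiod
    have habs (k : ℕ) := abs_iterate_signedLift_comp e hf.toIsInvolutionOn hh.toIsInvolutionOn u k
    have huS : u ∈ pmSet m := (mem_posInterval_iff_of_pos hu.1).1 hu
    obtain ⟨k, hk | hk⟩ := hconn.exists_iterate_comp hF.involutive hH.involutive
      (hF.mem_periodicPts_comp finite_pmSet hH.toIsInvolutionOn huS)
    · have hku : (h ∘ f)^[k] u = u := by
        have := congrArg abs hk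
        rwa [habs, abs_neg, abs_of_pos hu.1, eq_comm] at this
      obtain ⟨l, rfl⟩ := Function.IsPeriodicPt.minimalPeriod_dvd hku
      rw [(Function.IsPeriodicPt.mul_const hperiod l).eq] at hk
      exact (neg_lt_self hu.1).ne hk
    · have hku : f ((h ∘ f)^[k] u) = u := by
        have := congrArg abs hk
        rwa [hf.abs_signedLift, habs, abs_neg, abs_of_pos hu.1, eq_comm] at this
      exact hf.iterate_comp_ne_apply hh k hu (hf.involutive.eq_iff.1 hku)
  · rw [hneg, Units.val_neg, Units.val_one, neg_one_mul] at hperiod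
    exact hperiod ▸ Conn.iterate_comp _

end CycleLifts

section CountingOrbits

variable {κ β : Type*} {R : Set κ} {Q : κ → β} {ι : β → β}

theorem ncard_fixed_of_transversal
    (hsep : ∀ k ∈ R, ∀ l ∈ R, Q k = Q l ∨ Q k = ι (Q l) → k = l)
    (hι : Function.Involutive ι) :
    {a ∈ Q '' R ∪ (ι ∘ Q) '' R | ι a = a}.ncard = {k ∈ R | ι (Q k) = Q k}.ncard := by
  have hset : {a ∈ Q '' R ∪ (ι ∘ Q) '' R | ι a = a} = Q '' {k ∈ R | ι (Q k) = Q k} := by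
    refine Set.Subset.antisymm ?_ ?_
    · rintro _ ⟨⟨k, hk, rfl⟩ | ⟨k, hk, rfl⟩, hfix⟩
      · exact ⟨k, ⟨hk, hfix⟩, rfl⟩
      · have hfix' : ι (Q k) = Q k := (hfix.symm.trans (hι _))
        exact ⟨k, ⟨hk, hfix'⟩, hfix'.symm⟩
    · rintro _ ⟨k, ⟨hk, hfix⟩, rfl⟩
      exact ⟨Or.inl ⟨k, hk, rfl⟩, hfix⟩
  rw [hset, Set.InjOn.ncard_image fun k hk l hl hkl => hsep k hk.1 l hl.1 (Or.inl hkl)]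

theorem ncard_not_fixed_of_transversal (hR : R.Finite)
    (hsep : ∀ k ∈ R, ∀ l ∈ R, Q k = Q l ∨ Q k = ι (Q l) → k = l)
    (hι : Function.Involutive ι) :
    {a ∈ Q '' R ∪ (ι ∘ Q) '' R | ι a ≠ a}.ncard = 2 * {k ∈ R | ι (Q k) ≠ Q k}.ncard := by
  set N := {k ∈ R | ι (Q k) ≠ Q k}
  have hN : N.Finite := hR.subset (Set.sep_subset _ _)
  have hset : {a ∈ Q '' R ∪ (ι ∘ Q) '' R | ι a ≠ a} = Q '' N ∪ (ι ∘ Q) '' N := by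
    refine Set.Subset.antisymm ?_ ?_
    · rintro _ ⟨⟨k, hk, rfl⟩ | ⟨k, hk, rfl⟩, hmove⟩
      · exact Or.inl ⟨k, ⟨hk, hmove⟩, rfl⟩
      · exact Or.inr ⟨k, ⟨hk, fun hfix => hmove (congrArg ι hfix)⟩, rfl⟩
    · rintro _ (⟨k, ⟨hk, hmove⟩, rfl⟩ | ⟨k, ⟨hk, hmove⟩, rfl⟩)
      · exact ⟨Or.inl ⟨k, hk, rfl⟩, hmove⟩
      · exact ⟨Or.inr ⟨k, hk, rfl⟩, fun hfix => hmove (hι.injective hfix)⟩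
  have hinj : N.InjOn Q := fun k hk l hl hkl => hsep k hk.1 l hl.1 (Or.inl hkl)
  have hdisj : Disjoint (Q '' N) ((ι ∘ Q) '' N) := by
    rw [Set.disjoint_left]
    rintro _ ⟨k, hk, rfl⟩ ⟨l, hl, hlk⟩
    obtain rfl := hsep k hk.1 l hl.1 (Or.inr hlk.symm)
    exact hk.2 hlk
  rw [hset, Set.ncard_union_eq hdisj (hN.image _) (hN.image _), hinj.ncard_image,
    (hι.injective.comp_injOn hinj).ncard_image, two_mul]

end CountingOrbits

section CycleCounts

variable {m n : ℕ} {f h : ℤ → ℤ} {R : Set ℤ}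

theorem negSet_connClass {F H : ℤ → ℤ} (hF : Function.Odd F) (hH : Function.Odd H) (x : ℤ) :
    negSet (connClass F H x) = connClass F H (-x) :=
  image_connClass (φ := Neg.neg) (fun y => (hF y).symm) (fun y => (hH y).symm) x

theorem abs_image_connClass_signedLift (hf : IsInvolutionOn (posInterval m) f)
    (hh : IsInvolutionOn (posInterval m) h) (e : blocks (posInterval m) f → ℤˣ)
    (e' : blocks (posInterval m) h → ℤˣ) (x : ℤ) :
    (|·|) '' connClass (signedLift f e) (signedLift h e') x = connClass f h |x| :=
  image_connClass (hf.abs_signedLift e) (hh.abs_signedLift e') x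

theorem negSet_involutive : Function.Involutive negSet := fun A => by
  rw [negSet, negSet, Set.image_image]
  simp only [neg_neg, Set.image_id']

/-- `R` contains exactly one point of each cycle of the union of the partitions encoded by `F`
and `H`. -/
structure IsTransversal {α : Type*} (F H : α → α) (S R : Set α) : Prop where
  subset : R ⊆ S
  bijOn : R.BijOn (connClass F H) (connClass F H '' S)

theorem exists_isTransversal {α : Type*} (F H : α → α) (S : Set α) :
    ∃ R, IsTransversal F H S R := by
  obtain ⟨R, hRS, hR⟩ := Set.exists_subset_bijOn S (connClass F H)
  exact ⟨R, hRS, hR⟩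

theorem IsTransversal.eq_of_connClass_signedLift_eq (hR : IsTransversal f h (posInterval m) R)
    (hf : IsInvolutionOn (posInterval m) f) (hh : IsInvolutionOn (posInterval m) h)
    (e : blocks (posInterval m) f → ℤˣ) (e' : blocks (posInterval m) h → ℤˣ) :
    let Q := connClass (signedLift f e) (signedLift h e')
    ∀ u ∈ R, ∀ v ∈ R, Q u = Q v ∨ Q u = negSet (Q v) → u = v := by
  intro Q u hu v hv huv
  have habs : ∀ w, (|·|) '' Q w = connClass f h |w| := abs_image_connClass_signedLift hf hh e e'
  have habs' : connClass f h |u| = connClass f h |v| := by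
    rcases huv with huv | huv
    · rw [← habs, ← habs, huv]
    · rw [← abs_neg v, ← habs, ← habs, huv,
        negSet_connClass (signedLift_odd e) (signedLift_odd e')]
  rw [abs_of_pos (hR.subset hu).1, abs_of_pos (hR.subset hv).1] at habs'
  exact hR.bijOn.injOn hu hv habs'

theorem IsTransversal.image_connClass_signedLift (hR : IsTransversal f h (posInterval m) R)
    (hf : IsMatchingOn (posInterval m) f) (hh : IsMatchingOn (posInterval m) h)
    (e : blocks (posInterval m) f → ℤˣ) (e' : blocks (posInterval m) h → ℤˣ) :
    let Q := connClass (signedLift f e) (signedLift h e')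
    Q '' pmSet m = Q '' R ∪ (negSet ∘ Q) '' R := by
  intro Q
  have hneg : ∀ x, negSet (Q x) = Q (-x) :=
    negSet_connClass (signedLift_odd e) (signedLift_odd e')
  have hRm : R ⊆ pmSet m := fun u hu =>
    (mem_posInterval_iff_of_pos (hR.subset hu).1).1 (hR.subset hu)
  refine Set.Subset.antisymm ?_ (Set.union_subset (Set.image_mono hRm) ?_)
  · rintro _ ⟨x, hx, rfl⟩
    obtain ⟨u, hu, hux⟩ := hR.bijOn.surjOn ⟨|x|, abs_mem_posInterval.2 hx, rfl⟩
    obtain ⟨y, huy, hyx⟩ : |x| ∈ (|·|) '' Q u := by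
      rw [abs_image_connClass_signedLift hf.toIsInvolutionOn hh.toIsInvolutionOn e e',
        abs_of_pos (hR.subset hu).1, hux]
      exact .refl
    have hQuy : Q u = Q y := 
      (connClass_eq_iff (hf.signedLift e).involutive (hh.signedLift e').involutive).2 huy
    rcases abs_eq_abs.1 hyx with rfl | rfl
    · exact Or.inl ⟨u, hu, hQuy⟩
    · exact Or.inr ⟨u, hu, by rw [Function.comp_apply, hQuy, hneg, neg_neg]⟩
  · rintro _ ⟨u, hu, rfl⟩
    exact ⟨-u, neg_mem_pmSet.2 (hRm hu), (hneg u).symm⟩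

theorem IsTransversal.c2Count_eq_ncard (hR : IsTransversal f h (posInterval m) R)
    (hf : IsMatchingOn (posInterval m) f) (hh : IsMatchingOn (posInterval m) h)
    (hnc : IsNoncrossing h) (hhf : SameLegs h f) :
    c2Count m (blocks (posInterval m) f) = R.ncard := by
  have hcount := ncard_compsOf_blocks hf.toIsInvolutionOn hh.toIsInvolutionOn fun _ => True
  simp only [and_true, Set.ofPred_mem_eq] at hcount
  rw [c2Count, hat2Of_blocks hf hh hnc hhf, hcount, ← hR.bijOn.image_eq,
    hR.bijOn.injOn.ncard_image]

theorem negSet_connClass_signedLift_eq_iff (hf : IsMatchingOn (posInterval m) f)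
    (hh : IsMatchingOn (posInterval m) h) (e : blocks (posInterval m) f → ℤˣ) {u : ℤ}
    (hu : u ∈ posInterval m) :
    let Q := connClass (signedLift f e) (signedLift h (1 : blocks (posInterval m) h → ℤˣ))
    negSet (Q u) = Q u ↔ holonomy f h e u = -1 := by
  intro Q
  rw [negSet_connClass (signedLift_odd e) (signedLift_odd 1), eq_comm,
    connClass_eq_iff (hf.signedLift e).involutive (hh.signedLift 1).involutive,
    conn_neg_iff e hf hh hu]

theorem IsTransversal.cNeg_blocks_signedLift (hR : IsTransversal f h (posInterval (2 * n)) R)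
    (hf : IsMatchingOn (posInterval (2 * n)) f) (hh : IsMatchingOn (posInterval (2 * n)) h)
    (hnc : IsNoncrossing h) (hhf : SameLegs h f) (e : blocks (posInterval (2 * n)) f → ℤˣ) :
    cNeg n (blocks (pmSet (2 * n)) (signedLift f e)) = {u ∈ R | holonomy f h e u = -1}.ncard := by
  have hsep := hR.eq_of_connClass_signedLift_eq hf.toIsInvolutionOn hh.toIsInvolutionOn e 1
  rw [cNeg, hatOf_blocks_signedLift hf hh hnc hhf]
  refine (ncard_compsOf_blocks (hf.signedLift e).toIsInvolutionOn (hh.signedLift 1).toIsInvolutionOn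
    fun Q => negSet Q = Q).trans ?_
  rw [hR.image_connClass_signedLift hf hh,
    ncard_fixed_of_transversal hsep negSet_involutive]
  exact congrArg Set.ncard (Set.ext fun u => and_congr_right fun hu =>
    negSet_connClass_signedLift_eq_iff hf hh e (hR.subset hu))

theorem IsTransversal.cCount_blocks_signedLift (hR : IsTransversal f h (posInterval (2 * n)) R)
    (hf : IsMatchingOn (posInterval (2 * n)) f) (hh : IsMatchingOn (posInterval (2 * n)) h)
    (hnc : IsNoncrossing h) (hhf : SameLegs h f) (e : blocks (posInterval (2 * n)) f → ℤˣ) :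
    cCount n (blocks (pmSet (2 * n)) (signedLift f e)) = R.ncard := by
  have hsep := hR.eq_of_connClass_signedLift_eq hf.toIsInvolutionOn hh.toIsInvolutionOn e 1
  have hfin : R.Finite := finite_posInterval.subset hR.subset
  have hpositive : {K ∈ CompsOf (blocks (pmSet (2 * n)) (signedLift f e))
        (hatOf (2 * n) (blocks (pmSet (2 * n)) (signedLift f e))) | ¬NegComp K}.ncard =
      2 * {u ∈ R | holonomy f h e u ≠ -1}.ncard := by
    rw [hatOf_blocks_signedLift hf hh hnc hhf]
    refine (ncard_compsOf_blocks (hf.signedLift e).toIsInvolutionOn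
      (hh.signedLift 1).toIsInvolutionOn fun Q => negSet Q ≠ Q).trans ?_
    rw [hR.image_connClass_signedLift hf hh,
      ncard_not_fixed_of_transversal hfin hsep negSet_involutive]
    exact congrArg (2 * Set.ncard ·) (Set.ext fun u => and_congr_right fun hu =>
      (negSet_connClass_signedLift_eq_iff hf hh e (hR.subset hu)).not)
  rw [cCount, hpositive, Nat.mul_div_cancel_left _ two_pos,
    hR.cNeg_blocks_signedLift hf hh hnc hhf]
  exact Set.ncard_inter_add_ncard_sdiff_eq_ncard R {u | holonomy f h e u = -1} hfin

end CycleCounts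

section MainTheorem

variable {α M : Type*} [CommSemiring M] {n : ℕ}

theorem finsum_pow_card_holonomy {S R : Set α} {φ χ : α → α} (hS : S.Finite)
    (hφ : IsMatchingOn S φ) (hχ : IsMatchingOn S χ) (hRS : R ⊆ S)
    (hR : R.InjOn (connClass φ χ)) (q : M) :
    ∑ᶠ e : blocks S φ → ℤˣ, q ^ {u ∈ R | holonomy φ χ e u = -1}.ncard =
      (1 + q) ^ R.ncard * 2 ^ ((blocks S φ).ncard - R.ncard) := by
  classical
  have : Fintype R := (hS.subset hRS).fintype
  have : Fintype (blocks S φ) := (hS.image _).fintype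
  have hsurj := holonomyHom_surjective hS hφ hχ hRS hR
  have hcard (e : blocks S φ → ℤˣ) : {u ∈ R | holonomy φ χ e u = -1}.ncard =
      Nat.card {u // holonomyHom φ χ S R e u = -1} :=
    Nat.card_congr (Equiv.subtypeSubtypeEquivSubtypeInter (· ∈ R) (holonomy φ χ e · = -1)).symm
  calc ∑ᶠ e : blocks S φ → ℤˣ, q ^ {u ∈ R | holonomy φ χ e u = -1}.ncard
      = ∑ e, q ^ Nat.card {u // holonomyHom φ χ S R e u = -1} := by
        simp only [finsum_eq_sum_of_fintype, hcard]
    _ = Nat.card (holonomyHom φ χ S R).ker * ∑ t : R → ℤˣ, q ^ Nat.card {u // t u = -1} :=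
        sum_comp_of_surjective _ hsurj fun t => q ^ Nat.card {u // t u = -1}
    _ = (1 + q) ^ R.ncard * 2 ^ ((blocks S φ).ncard - R.ncard) := by
        rw [sum_pow_card_neg_one, card_ker_of_surjective_units _ hsurj, mul_comm, Nat.cast_pow,
          Nat.cast_ofNat, Nat.card_coe_set_eq, Nat.card_coe_set_eq]

theorem ncard_fiber {f : ℤ → ℤ} (hf : IsMatchingOn (posInterval (2 * n)) f) :
    {σ | P2sym n σ ∧ Pmap σ = blocks (posInterval (2 * n)) f}.ncard = 2 ^ n := by
  have : Finite (blocks (posInterval (2 * n)) f) := finite_posInterval.image _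
  rw [fiber_eq_range hf, ← Set.image_univ, Set.ncard_image_of_injective _
    (blocks_signedLift_injective hf), Set.ncard_univ, Nat.card_fun, Nat.card_coe_set_eq,
    card_blocks hf, Nat.card_eq_fintype_card, Fintype.card_units_int]

theorem fiber_of_projection_general (n : ℕ) (qp qm : M) (π : Set (Set ℤ))
    (hπ : P2on (2 * n) π) :
    {σ : Set (Set ℤ) | P2sym n σ ∧ Pmap σ = π}.ncard = 2 ^ n ∧
    (∀ σ : Set (Set ℤ), P2sym n σ → Pmap σ = π → cCount n σ = c2Count (2 * n) π) ∧
    (∑ᶠ σ ∈ {σ : Set (Set ℤ) | P2sym n σ ∧ Pmap σ = π},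
        qm ^ cNeg n σ * qp ^ (n - cCount n σ))
      = (1 + qm) ^ c2Count (2 * n) π * (2 * qp) ^ (n - c2Count (2 * n) π) := by
  obtain ⟨f, hf, rfl⟩ := hπ.1.exists_isMatchingOn hπ.2
  obtain ⟨h, hh, hnc, hhf⟩ := hf.exists_isNoncrossing finite_posInterval
  obtain ⟨R, hR⟩ := exists_isTransversal f h (posInterval (2 * n))
  refine ⟨ncard_fiber hf, fun σ hσ hσπ => ?_, ?_⟩
  · obtain ⟨e, rfl⟩ := (fiber_eq_range hf).subset ⟨hσ, hσπ⟩
    rw [hR.cCount_blocks_signedLift hf hh hnc hhf, hR.c2Count_eq_ncard hf hh hnc hhf]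
  · have hfin : Finite (blocks (posInterval (2 * n)) f) := finite_posInterval.image _
    rw [fiber_eq_range hf, finsum_mem_range (blocks_signedLift_injective hf)]
    simp only [hR.cCount_blocks_signedLift hf hh hnc hhf, hR.cNeg_blocks_signedLift hf hh hnc hhf]
    rw [← finsum_mul' _ _ (Set.toFinite _), finsum_pow_card_holonomy finite_posInterval hf hh
      hR.subset hR.bijOn.injOn, card_blocks hf, hR.c2Count_eq_ncard hf hh hnc hhf, mul_assoc,
      mul_pow]

end MainTheorem

/-- for every pair partition π ∈ P₂(2n), the fiber P⁻¹(π) has exactly 2ⁿ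
elements, every σ in the fiber has c(σ) = c(π) cycles, and
Σ_{σ∈P⁻¹(π)} q₋^{c₋(σ)} q₊^{l_c(σ)} = (1+q₋)^{c(π)} (2q₊)^{n−c(π)}
(l_c(σ) = n − c(σ)). -/
theorem fiber_of_projection (n : ℕ) (qp qm : ℂ) (π : Set (Set ℤ))
    (hπ : P2on (2 * n) π) :
    {σ : Set (Set ℤ) | P2sym n σ ∧ Pmap σ = π}.ncard = 2 ^ n ∧
    (∀ σ : Set (Set ℤ), P2sym n σ → Pmap σ = π → cCount n σ = c2Count (2 * n) π) ∧
    (∑ᶠ σ ∈ {σ : Set (Set ℤ) | P2sym n σ ∧ Pmap σ = π},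
        qm ^ cNeg n σ * qp ^ (n - cCount n σ))
      = (1 + qm) ^ c2Count (2 * n) π * (2 * qp) ^ (n - c2Count (2 * n) π) :=
  fiber_of_projection_general n qp qm π hπ

end TypeB
end
end

section
/- Let q ∈ ℂ. The following are equivalent: (i) the reflection function σ ↦ q^{ℓ_R(σ)} is positive definite on D(∞); (ii) it is a character of D(∞); (iii) it is an extreme character of D(∞); (iv) q = 0 or q = 1/(2N+1) for some N ∈ ℤ. -/
/-!
STATEMENT 19: for q ∈ ℂ the following are equivalent:
(i) the reflection function σ ↦ q^{ℓ_R(σ)} is positive definite on D(∞);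
(ii) it is a character of D(∞);
(iii) it is an extreme character of D(∞);
(iv) q = 0 or q = 1/(2N+1) for some N ∈ ℤ.

D(∞) is the index-two subgroup of B(∞) of elements with an even number of negative
cycles; equivalently (signed model) those with g₁g₂⋯ = 1, i.e. with an even number of
positive i with σ(i) < 0.  Its reflections are the long reflections (i j)(−i −j),
|i| ≠ |j|, and ℓ_R is the minimal length of a factorization into them.  Characters of
D(∞) are encoded as functions on the ambient group Perm ℤ vanishing outside D(∞).
-/

open scoped ComplexOrder

noncomputable section

namespace TypeD

/-- The infinite hyperoctahedral group B(∞): finitary permutations of ℤ∖{0}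
commuting with negation. -/
def BInfSet : Set (Equiv.Perm ℤ) :=
  {σ | (∀ i : ℤ, σ (-i) = -σ i) ∧ {i : ℤ | σ i ≠ i}.Finite}

/-- D(∞): the index-two subgroup of B(∞) of elements with an even number of negative
cycles, equivalently (signed model) an even number of sign changes g_j = −1, i.e. an
even number of positive integers i with σ(i) < 0. -/
def DInfSet : Set (Equiv.Perm ℤ) :=
  {σ | σ ∈ BInfSet ∧ Even ({i : ℤ | 0 < i ∧ σ i < 0}.ncard)}

/-- The long reflections (i j)(−i −j), |i| ≠ |j| — these are the reflections of D(∞). -/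
def IsLongRefl (r : Equiv.Perm ℤ) : Prop :=
  ∃ i j : ℤ, i ≠ 0 ∧ j ≠ 0 ∧ |i| ≠ |j| ∧
    r = Equiv.swap i j * Equiv.swap (-i) (-j)

/-- The reflection length ℓ_R on D(∞): the minimal number of long reflections whose
product is σ. -/
def reflLenD (σ : Equiv.Perm ℤ) : ℕ :=
  sInf {k : ℕ | ∃ r : Fin k → Equiv.Perm ℤ,
    (∀ t, IsLongRefl (r t)) ∧ (List.ofFn r).prod = σ}

/-- A function on a group is positive definite on a subset S. -/
def IsPosDefOn {G : Type*} [Group G] (S : Set G) (f : G → ℂ) : Prop :=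
  ∀ (k : ℕ) (g : Fin k → G), (∀ i, g i ∈ S) → ∀ z : Fin k → ℂ,
    0 ≤ ∑ i : Fin k, ∑ j : Fin k, z i * (starRingEnd ℂ) (z j) * f ((g j)⁻¹ * g i)

open Classical in
/-- The reflection function q^{ℓ_R} of D(∞), extended by zero outside D(∞).
(The exponent is a natural number, so the value at the identity is 1 even for q = 0.) -/
def reflFunD (q : ℂ) : Equiv.Perm ℤ → ℂ :=
  fun σ => if σ ∈ DInfSet then q ^ reflLenD σ else 0

/-- The set of characters of D(∞): central, positive definite, normalized functions,
encoded as functions on Perm ℤ vanishing outside D(∞). -/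
def CharSetD : Set (Equiv.Perm ℤ → ℂ) :=
  {f | (∀ σ, σ ∉ DInfSet → f σ = 0) ∧
       (∀ g ∈ DInfSet, ∀ h ∈ DInfSet, f (h * g * h⁻¹) = f g) ∧
       IsPosDefOn DInfSet f ∧ f 1 = 1}

/-!
Write `codim σ` for the codimension of the fixed space of `σ` in the reflection representation.
On `D(∞)` it equals the reflection length, and it is additive on permutations with disjoint
supports.

For odd `m`, `m ^ (-codim σ)` is the inverse index, among the odd functions `ℤ → ℤ/m`, of those
fixed by `σ`. The kernel `(g, h) ↦ m ^ (-codim (h⁻¹ g))` is then the probability that a random odd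
function has the same translates by `g` and by `h`, so it is positive definite. Twisting by the
determinant `(-1) ^ codim σ` gives `-1/m`.

Conversely, averaging a positive definite `t ^ codim` over `D(n + 1)` gives
`(1 + n t) ∏_{i < n} (1 + (2 i + 1) t) ≥ 0` for all `n`, which for `t < 0` forces a factor
`1 + (2 i + 1) t` to vanish; the case `t > 0` is reduced to this one by the determinant twist.

For extremality, conjugates `τ₀, τ₁, …` of `σ` with disjoint supports satisfy
`φ (τₜ⁻¹ τₛ) = |φ σ|²`, which is the equality case of Cauchy–Schwarz in the limit of many
conjugates.
-/

open Equiv ComplexConjugate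

section PositiveDefinite

variable {G : Type*} [Group G] {S T : Set G} {f : G → ℂ} {ι : Type*} [Fintype ι]

lemma IsPosDefOn.sum_nonneg (hf : IsPosDefOn S f) {g : ι → G} (hg : ∀ i, g i ∈ S) (z : ι → ℂ) :
    0 ≤ ∑ i, ∑ j, z i * conj (z j) * f ((g j)⁻¹ * g i) := by
  let e := (Fintype.equivFin ι).symm
  have h := hf _ (g ∘ e) (fun i => hg (e i)) (z ∘ e)
  rw [← e.sum_comp]
  simp only [← e.sum_comp (fun j => _ * conj (z j) * _)]
  exact h

lemma IsPosDefOn.mono (hf : IsPosDefOn T f) (hST : S ⊆ T) : IsPosDefOn S f :=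
  fun k g hg => hf k g fun i => hST (hg i)

lemma isPosDefOn_congr {H : Subgroup G} {f' : G → ℂ} (h : ∀ g ∈ H, f g = f' g) :
    IsPosDefOn (H : Set G) f ↔ IsPosDefOn (H : Set G) f' := by
  refine forall₃_congr fun k g hg => ?_
  simp only [h _ (H.mul_mem (H.inv_mem (hg _)) (hg _))]

lemma IsPosDefOn.mul_twist (hf : IsPosDefOn S f) {s : G → ℂ}
    (hs : ∀ g ∈ S, ∀ h ∈ S, s (g⁻¹ * h) = conj (s g) * s h) :
    IsPosDefOn S (fun g => s g * f g) := by
  intro k g hg z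
  refine (hf k g hg fun i => z i * s (g i)).trans_eq ?_
  refine Finset.sum_congr rfl fun i _ => Finset.sum_congr rfl fun j _ => ?_
  simp only [hs _ (hg j) _ (hg i), map_mul]
  ring

lemma IsPosDefOn.map_inv (hf : IsPosDefOn S f) (h1 : 1 ∈ S) {g : G} (hg : g ∈ S) :
    f g⁻¹ = conj (f g) := by
  have key (w z : ℂ) : 0 ≤ w * conj w * f 1 + w * conj z * f g⁻¹ +
      (z * conj w * f g + z * conj z * f 1) := by
    simpa using hf 2 ![1, g] (by simp [Fin.forall_fin_two, h1, hg]) ![w, z]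
  have h10 := (Complex.nonneg_iff.mp (key 1 0)).2
  have h11 := (Complex.nonneg_iff.mp (key 1 1)).2
  have h1I := (Complex.nonneg_iff.mp (key 1 Complex.I)).2
  simp only [map_one, mul_one, one_mul, map_zero, mul_zero, zero_mul, add_zero, zero_add,
    Complex.conj_I, mul_neg, neg_mul, Complex.I_mul_I, neg_neg, Complex.add_im, Complex.neg_im,
    Complex.mul_im, Complex.I_re, Complex.I_im] at h10 h11 h1I
  apply Complex.ext
  · simp only [Complex.conj_re]; linarith
  · simp only [Complex.conj_im]; linarith

lemma IsPosDefOn.sum_subgroup_nonneg (hf : IsPosDefOn S f) {H : Subgroup G} [Fintype H]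
    (hH : (H : Set G) ⊆ S) : 0 ≤ ∑ h : H, f h := by
  have h := hf.sum_nonneg (g := ((↑) : H → G)) (fun h => hH h.2) 1
  have inner (i : H) : ∑ j : H, f ((j : G)⁻¹ * i) = ∑ h : H, f h :=
    ((Equiv.inv H).trans (Equiv.mulRight i)).sum_comp fun h : H => f h
  simp only [Pi.one_apply, map_one, one_mul, inner, Finset.sum_const,
    Finset.card_univ, nsmul_eq_mul] at h
  have hcard : (0 : ℂ) < Fintype.card H := mod_cast Fintype.card_pos
  exact le_of_mul_le_mul_left (by rwa [mul_zero]) hcard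

lemma IsPosDefOn.sq_card_mul_normSq_le (hf : IsPosDefOn S f) (h1 : 1 ∈ S) (hf1 : f 1 = 1)
    {τ : ι → G} (hτ : ∀ t, τ t ∈ S) {c : ℂ} (hc : ∀ t, f (τ t) = c) :
    (Fintype.card ι : ℂ) ^ 2 * Complex.normSq c ≤ ∑ s, ∑ t, f ((τ t)⁻¹ * τ s) := by
  have h := hf.sum_nonneg (g := fun o : Option ι => o.elim 1 τ)
    (by rintro (_ | t) <;> simp [h1, hτ]) (fun o => o.elim (-(Fintype.card ι * c)) 1)
  have hc' (t : ι) : f (τ t)⁻¹ = conj c := by rw [hf.map_inv h1 (hτ t), hc]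
  simp only [Fintype.sum_option, Option.elim_none, Option.elim_some, Pi.one_apply, map_one, one_mul,
    mul_one, inv_one, hf1, hc, hc', map_neg, map_mul, Complex.conj_natCast, Finset.sum_const,
    Finset.sum_add_distrib, Finset.card_univ, nsmul_eq_mul] at h
  rw [Complex.normSq_eq_conj_mul_self, ← sub_nonneg]
  convert h using 1
  ring

/-- The kernel `(i, j) ↦ [c i = c j]` is the Gram kernel of the indicator vectors of the `c i`. -/
lemma sum_coincidence_nonneg {κ : Type*} [DecidableEq κ] (c : ι → κ) (z : ι → ℂ) :
    0 ≤ ∑ i, ∑ j, z i * conj (z j) * (if c i = c j then 1 else 0) := by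
  have h (i j : ι) : z i * conj (z j) * (if c i = c j then 1 else 0) =
      ∑ a ∈ Finset.univ.image c,
        (if c i = a then z i else 0) * conj (if c j = a then z j else 0) := by
    rw [Finset.sum_eq_single_of_mem (c i) (by simp) fun a _ ha => by simp [ha.symm]]
    split_ifs <;> simp_all
  simp only [h]
  rw [Finset.sum_congr rfl fun i _ => Finset.sum_comm, Finset.sum_comm]
  refine Finset.sum_nonneg fun a _ => ?_
  rw [← Finset.sum_mul_sum, ← map_sum]
  exact mul_star_self_nonneg _

lemma isPosDefOn_single_one [DecidableEq G] :
    IsPosDefOn S (fun g => if g = 1 then 1 else 0) := by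
  intro k g _ z
  simpa only [inv_mul_eq_one, eq_comm] using sum_coincidence_nonneg g z

lemma inv_index_eq_card_map_div {V : Type*} [AddCommGroup V] {H K : AddSubgroup V} (hHK : H ≤ K)
    [hH : H.FiniteIndex] :
    (K.index : ℂ)⁻¹ = Nat.card (K.map (QuotientAddGroup.mk' H)) / H.index := by
  rw [← AddSubgroup.relIndex_ker, QuotientAddGroup.ker_mk', ← AddSubgroup.relIndex_mul_index hHK]
  have := (mul_ne_zero_iff.mp ((AddSubgroup.relIndex_mul_index hHK).trans_ne hH.index_ne_zero)).1
  push_cast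
  field_simp

/-- Over a finite common quotient of `V`, `1 / [V : eqLocus (u i) (u j)]` is the probability that
`u i` and `u j` coincide. -/
lemma sum_inv_index_eqLocus_nonneg {V W : Type*} [AddCommGroup V] [AddCommGroup W]
    (u : ι → V →+ W) (hu : ∀ i j, ((u i).eqLocus (u j)).FiniteIndex) (z : ι → ℂ) :
    0 ≤ ∑ i, ∑ j, z i * conj (z j) * (((u i).eqLocus (u j)).index : ℂ)⁻¹ := by
  classical
  let H : AddSubgroup V := ⨅ p : ι × ι, (u p.1).eqLocus (u p.2)
  have : H.FiniteIndex := AddSubgroup.finiteIndex_iInf fun p => hu p.1 p.2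
  have hle (i j : ι) : H ≤ (u i).eqLocus (u j) := iInf_le_of_le (i, j) le_rfl
  have : Fintype (V ⧸ H) := Fintype.ofFinite _
  have mem_map_iff (i j : ι) (q : V ⧸ H) :
      q ∈ ((u i).eqLocus (u j)).map (QuotientAddGroup.mk' H) ↔ u i q.out = u j q.out := by
    refine ⟨?_, fun h => ⟨q.out, h, by simp⟩⟩
    rintro ⟨v, hv, rfl⟩
    obtain ⟨h, hh⟩ := QuotientAddGroup.mk_out_eq_add H v
    rw [QuotientAddGroup.mk'_apply, hh]
    exact add_mem hv (hle i j h.2)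
  have inv_index (i j : ι) : (((u i).eqLocus (u j)).index : ℂ)⁻¹ =
      (H.index : ℂ)⁻¹ * ∑ q : V ⧸ H, if u i q.out = u j q.out then 1 else 0 := by
    rw [inv_index_eq_card_map_div (hle i j), Finset.sum_boole, div_eq_inv_mul,
      Nat.card_congr (Equiv.subtypeEquivRight (mem_map_iff i j)), Nat.card_eq_fintype_card,
      Fintype.card_subtype]
  have hsum : ∑ i, ∑ j, z i * conj (z j) * (((u i).eqLocus (u j)).index : ℂ)⁻¹ =
      (H.index : ℂ)⁻¹ * ∑ q : V ⧸ H, ∑ i, ∑ j,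
        z i * conj (z j) * if u i q.out = u j q.out then 1 else 0 := by
    simp only [inv_index, Finset.mul_sum]
    rw [Finset.sum_comm (s := (Finset.univ : Finset (V ⧸ H)))]
    refine Finset.sum_congr rfl fun i _ => ?_
    rw [Finset.sum_comm]
    exact Finset.sum_congr rfl fun q _ => Finset.sum_congr rfl fun j _ => mul_left_comm _ _ _
  rw [hsum]
  refine mul_nonneg (by positivity) (Finset.sum_nonneg fun q _ => ?_)
  exact sum_coincidence_nonneg (fun i => u i q.out) z

end PositiveDefinite

section SignedPermutations

/-- The group `B(∞)`. -/
def BInf : Subgroup (Perm ℤ) where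
  carrier := BInfSet
  mul_mem' := by
    rintro σ τ ⟨hσ, hσfin⟩ ⟨hτ, hτfin⟩
    exact ⟨fun i => by simp [hσ, hτ],
      (hσfin.union hτfin).subset (Perm.set_support_mul_subset σ τ)⟩
  one_mem' := by simp [BInfSet]
  inv_mem' := by
    rintro σ ⟨hσ, hσfin⟩
    refine ⟨fun i => by rw [Perm.inv_eq_iff_eq, hσ]; simp, hσfin.subset fun i hi h => hi ?_⟩
    exact Perm.inv_eq_iff_eq.mpr h.symm

/-- The finite hyperoctahedral group `B(n)`, acting on `{±1, …, ±n}` inside `ℤ`. -/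
def BFin (n : ℕ) : Subgroup (Perm ℤ) where
  carrier := {σ | (∀ i : ℤ, σ (-i) = -σ i) ∧ ∀ i : ℤ, (n : ℤ) < |i| → σ i = i}
  mul_mem' := by
    rintro σ τ ⟨hσ, hσ'⟩ ⟨hτ, hτ'⟩
    exact ⟨fun i => by simp [hσ, hτ], fun i hi => by simp [hτ' i hi, hσ' i hi]⟩
  one_mem' := by simp
  inv_mem' := by
    rintro σ ⟨hσ, hσ'⟩
    exact ⟨fun i => by rw [Perm.inv_eq_iff_eq, hσ]; simp,
      fun i hi => by rw [Perm.inv_eq_iff_eq, hσ' i hi]⟩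

variable {n m : ℕ} {σ τ : Perm ℤ} {i j : ℤ}

lemma apply_zero_of_mem_BInf (hσ : σ ∈ BInf) : σ 0 = 0 := by
  have := hσ.1 0
  simp only [neg_zero] at this
  omega

lemma apply_ne_zero_of_mem_BInf (hσ : σ ∈ BInf) (hi : i ≠ 0) : σ i ≠ 0 := fun h =>
  hi (σ.injective (h.trans (apply_zero_of_mem_BInf hσ).symm))

lemma ne_zero_of_apply_ne (hσ : σ ∈ BInf) (hi : σ i ≠ i) : i ≠ 0 := by
  rintro rfl
  exact hi (apply_zero_of_mem_BInf hσ)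

lemma BFin_mono (h : n ≤ m) : BFin n ≤ BFin m := fun _ hσ =>
  ⟨hσ.1, fun i hi => hσ.2 i ((Int.ofNat_le.mpr h).trans_lt hi)⟩

lemma abs_le_of_apply_ne (hσ : σ ∈ BFin n) (hi : σ i ≠ i) : |i| ≤ n :=
  not_lt.mp fun h => hi (hσ.2 i h)

lemma abs_apply_le (hσ : σ ∈ BFin n) (hi : |i| ≤ n) : |σ i| ≤ n := by
  by_contra! h
  rw [σ.injective (hσ.2 _ h)] at h
  exact h.not_ge hi

lemma BFin_le_BInf : BFin n ≤ BInf := fun _ hσ =>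
  ⟨hσ.1, (Set.finite_Icc (-(n : ℤ)) n).subset fun _ hi => abs_le.mp (abs_le_of_apply_ne hσ hi)⟩

lemma exists_mem_BFin (hσ : σ ∈ BInf) : ∃ n, σ ∈ BFin n := by
  obtain ⟨n, hn⟩ := (hσ.2.image Int.natAbs).bddAbove
  refine ⟨n, hσ.1, fun i hi => not_not.mp fun h => ?_⟩
  have : i.natAbs ≤ n := hn ⟨i, h, rfl⟩
  rw [Int.abs_eq_natAbs] at hi
  omega

lemma exists_common_BFin (hσ : σ ∈ BInf) (hτ : τ ∈ BInf) : ∃ n, σ ∈ BFin n ∧ τ ∈ BFin n := by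
  obtain ⟨n, hn⟩ := exists_mem_BFin hσ
  obtain ⟨m, hm⟩ := exists_mem_BFin hτ
  exact ⟨max n m, BFin_mono (le_max_left n m) hn, BFin_mono (le_max_right n m) hm⟩

/-- The reflection of `B(∞)` exchanging `i` and `j`: long if `|i| ≠ |j|`, short if `j = -i`, and
trivial if `j = i`. -/
def signedSwap (i j : ℤ) : Perm ℤ := if j = -i then swap i j else swap i j * swap (-i) (-j)

lemma signedSwap_self (i : ℤ) : signedSwap i i = 1 := by
  ext x
  unfold signedSwap
  split_ifs <;> simp

lemma signedSwap_apply (hi : i ≠ 0) (hj : j ≠ 0) (x : ℤ) :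
    signedSwap i j x =
      if x = i then j else if x = j then i
      else if x = -i then -j else if x = -j then -i else x := by
  unfold signedSwap
  split_ifs <;> simp only [Perm.mul_apply, swap_apply_def] <;> grind

lemma signedSwap_mem_BFin (hi : i ≠ 0) (hj : j ≠ 0) (hin : |i| ≤ n) (hjn : |j| ≤ n) :
    signedSwap i j ∈ BFin n := by
  refine ⟨fun x => ?_, fun x hx => ?_⟩
  · rw [signedSwap_apply hi hj, signedSwap_apply hi hj]
    split_ifs <;> omega
  · rw [abs_le] at hin hjn
    rw [lt_abs] at hx
    rw [signedSwap_apply hi hj]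
    split_ifs <;> omega

lemma signedSwap_mem_BInf (hi : i ≠ 0) (hj : j ≠ 0) : signedSwap i j ∈ BInf :=
  BFin_le_BInf (n := max i.natAbs j.natAbs)
    (signedSwap_mem_BFin hi hj (by rw [Int.abs_eq_natAbs]; omega)
      (by rw [Int.abs_eq_natAbs]; omega))

lemma signedSwap_mul_self (hi : i ≠ 0) (hj : j ≠ 0) : signedSwap i j * signedSwap i j = 1 := by
  ext x
  simp only [Perm.mul_apply, Perm.one_apply, signedSwap_apply hi hj]
  split_ifs <;> omega

lemma signedSwap_mul_cancel_left (hi : i ≠ 0) (hj : j ≠ 0) (σ : Perm ℤ) :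
    signedSwap i j * (signedSwap i j * σ) = σ := by
  rw [← mul_assoc, signedSwap_mul_self hi hj, one_mul]

lemma isLongRefl_iff {r : Perm ℤ} :
    IsLongRefl r ↔ ∃ i j : ℤ, i ≠ 0 ∧ j ≠ 0 ∧ |i| ≠ |j| ∧ r = signedSwap i j := by
  refine exists₂_congr fun i j => and_congr_right fun _ => and_congr_right fun _ =>
    and_congr_right fun h => ?_
  rw [signedSwap, if_neg]
  rintro rfl
  exact h (abs_neg i).symm

lemma signedSwap_mul_apply_of_apply_eq (hσ : σ ∈ BInf) (hi : σ i ≠ i) {x : ℤ} (hx : σ x = x) :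
    (signedSwap i (σ i) * σ) x = x := by
  have hi0 := ne_zero_of_apply_ne hσ hi
  rw [Perm.mul_apply, hx, signedSwap_apply hi0 (apply_ne_zero_of_mem_BInf hσ hi0)]
  have hneg := hσ.1 i
  have hneg' := hσ.1 (σ i)
  have hmoved : σ (σ i) ≠ σ i := fun h => hi (σ.injective h)
  split_ifs with h₁ h₂ h₃ h₄ <;> subst_vars <;> omega

lemma signedSwap_mul_apply_self (hσ : σ ∈ BInf) (hi : σ i ≠ i) :
    (signedSwap i (σ i) * σ) i = i := by
  have hi0 := ne_zero_of_apply_ne hσ hi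
  rw [Perm.mul_apply, signedSwap_apply hi0 (apply_ne_zero_of_mem_BInf hσ hi0), if_neg hi,
    if_pos rfl]

lemma signedSwap_apply_mem_BInf (hσ : σ ∈ BInf) (hi : σ i ≠ i) : signedSwap i (σ i) ∈ BInf :=
  signedSwap_mem_BInf (ne_zero_of_apply_ne hσ hi)
    (apply_ne_zero_of_mem_BInf hσ (ne_zero_of_apply_ne hσ hi))

lemma BInf_induction {P : Perm ℤ → Prop} (one : P 1)
    (step : ∀ σ ∈ BInf, ∀ i, σ i ≠ i → P (signedSwap i (σ i) * σ) → P σ) :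
    ∀ σ ∈ BInf, P σ := by
  intro σ hσ
  induction hk : {x | σ x ≠ x}.ncard using Nat.strong_induction_on generalizing σ with
  | _ k ih =>
    by_cases hσ1 : σ = 1
    · exact hσ1 ▸ one
    obtain ⟨i, hi⟩ : ∃ i, σ i ≠ i := not_forall.mp fun h => hσ1 (Equiv.ext h)
    refine step σ hσ i hi (ih _ ?_ _ (mul_mem (signedSwap_apply_mem_BInf hσ hi) hσ) rfl)
    rw [← hk]
    refine Set.ncard_lt_ncard ⟨fun x hx h => hx (signedSwap_mul_apply_of_apply_eq hσ hi h), ?_⟩ hσ.2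
    exact fun h => h hi (signedSwap_mul_apply_self hσ hi)

end SignedPermutations

section Codimension

variable (A : Type*) [AddCommGroup A]

/-- The odd functions `ℤ → A`, on which `B(∞)` acts by precomposition; for a field `A` of odd
characteristic this is the (completed) reflection representation. -/
def oddFun : AddSubgroup (ℤ → A) where
  carrier := {f | ∀ i, f (-i) = -f i}
  add_mem' := fun hf hg i => by simp only [Pi.add_apply, hf i, hg i, neg_add]
  zero_mem' := by simp
  neg_mem' := fun hf i => by simp only [Pi.neg_apply, hf i]

/-- The odd functions invariant under `σ`. -/
def fixedOdd (σ : Perm ℤ) : AddSubgroup (oddFun A) where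
  carrier := {f | ∀ i, f.1 (σ i) = f.1 i}
  add_mem' := fun hf hg i => by simp [hf i, hg i]
  zero_mem' := by simp
  neg_mem' := fun hf i => by simp [hf i]

/-- The linear form `f ↦ f i - f j`; its kernel is the reflecting hyperplane of `signedSwap i j`. -/
def evalSub (i j : ℤ) : oddFun A →+ A where
  toFun f := f.1 i - f.1 j
  map_zero' := by simp
  map_add' f g := by simp [add_sub_add_comm]

/-- Precomposition with an element of `B(∞)`. -/
def precomp (g : BInf) : oddFun A →+ oddFun A where
  toFun f := ⟨f.1 ∘ g.1, fun i => by simp [g.2.1 i, f.2 (g.1 i)]⟩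
  map_zero' := rfl
  map_add' _ _ := rfl

variable {A} {σ τ : Perm ℤ} {i j : ℤ}

lemma mem_fixedOdd {f : oddFun A} : f ∈ fixedOdd A σ ↔ ∀ i, f.1 (σ i) = f.1 i := Iff.rfl

lemma mem_ker_evalSub {f : oddFun A} : f ∈ (evalSub A i j).ker ↔ f.1 i = f.1 j := sub_eq_zero

lemma fixedOdd_one : fixedOdd A 1 = ⊤ := eq_top_iff.mpr fun _ _ _ => rfl

lemma fixedOdd_inv (σ : Perm ℤ) : fixedOdd A σ⁻¹ = fixedOdd A σ := by
  ext f
  rw [mem_fixedOdd, mem_fixedOdd, ← σ.forall_congr_right]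
  exact forall_congr' fun i => by simp [eq_comm]

lemma fixedOdd_conj (g : BInf) (σ : Perm ℤ) :
    fixedOdd A (g.1 * σ * g.1⁻¹) = (fixedOdd A σ).comap (precomp A g) := by
  ext f
  rw [mem_fixedOdd, ← g.1.forall_congr_right]
  simp [mem_fixedOdd, precomp]

lemma precomp_surjective (g : BInf) : Function.Surjective (precomp A g) := fun f =>
  ⟨precomp A g⁻¹ f, Subtype.ext (funext fun i => by simp [precomp])⟩

lemma eqLocus_precomp_inv (g h : BInf) :
    (precomp A g⁻¹).eqLocus (precomp A h⁻¹) = fixedOdd A (h.1⁻¹ * g.1) := by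
  ext f
  rw [mem_fixedOdd, g.1.forall_congr_left]
  change precomp A g⁻¹ f = precomp A h⁻¹ f ↔ _
  simp [Subtype.ext_iff, funext_iff, precomp, eq_comm]

lemma apply_signedSwap_of_odd {f : ℤ → A} (hf : ∀ x, f (-x) = -f x) (hi : i ≠ 0) (hj : j ≠ 0)
    (h : f i = f j) (x : ℤ) : f (signedSwap i j x) = f x := by
  rw [signedSwap_apply hi hj]
  split_ifs <;> simp_all

lemma fixedOdd_signedSwap_mul_inf_ker (hi : i ≠ 0) (hj : j ≠ 0) (σ : Perm ℤ) :
    fixedOdd A (signedSwap i j * σ) ⊓ (evalSub A i j).ker =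
      fixedOdd A σ ⊓ (evalSub A i j).ker := by
  ext f
  simp only [AddSubgroup.mem_inf, mem_ker_evalSub]
  refine and_congr_left fun h => forall_congr' fun x => ?_
  rw [Perm.mul_apply, apply_signedSwap_of_odd f.2 hi hj h]

lemma index_inf_ker_evalSub (F : AddSubgroup (oddFun A)) (i j : ℤ) :
    (F ⊓ (evalSub A i j).ker).index = Nat.card (F.map (evalSub A i j)) * F.index := by
  rw [← AddSubgroup.relIndex_mul_index (inf_le_left (a := F)), inf_comm,
    AddSubgroup.inf_relIndex_right, AddSubgroup.relIndex_ker]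

lemma index_fixedOdd_signedSwap_mul_dvd (hi : i ≠ 0) (hj : j ≠ 0) (σ : Perm ℤ) :
    (fixedOdd A (signedSwap i j * σ)).index ∣ Nat.card A * (fixedOdd A σ).index :=
  calc (fixedOdd A (signedSwap i j * σ)).index
    _ ∣ (fixedOdd A (signedSwap i j * σ) ⊓ (evalSub A i j).ker).index :=
      AddSubgroup.index_dvd_of_le inf_le_left
    _ = Nat.card ((fixedOdd A σ).map (evalSub A i j)) * (fixedOdd A σ).index := by
      rw [fixedOdd_signedSwap_mul_inf_ker hi hj, index_inf_ker_evalSub]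
    _ ∣ Nat.card A * (fixedOdd A σ).index :=
      mul_dvd_mul_right (AddSubgroup.card_addSubgroup_dvd_card _) _

/-- The odd function `b (δ_i - δ_{-i})` is fixed by `σ` as soon as `i` is, and `2` is invertible
on `A`. -/
lemma map_evalSub_fixedOdd_eq_top (hA : Odd (Nat.card A)) (hσ : ∀ x, σ (-x) = -σ x)
    (hi : i ≠ 0) (hij : j ≠ i) (hσi : σ i = i) :
    (fixedOdd A σ).map (evalSub A i j) = ⊤ := by
  refine eq_top_iff.mpr fun a _ => ?_
  obtain ⟨b, hb⟩ : ∃ b : A, (if j = -i then 2 • b else b) = a := by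
    split_ifs
    · exact (nsmulCoprime hA.coprime_two_right).surjective a
    · exact ⟨a, rfl⟩
  have hσ_iff (x : ℤ) : σ x = i ↔ x = i := ⟨fun h => σ.injective (h.trans hσi.symm), by grind⟩
  have hσ_neg_iff (x : ℤ) : σ x = -i ↔ x = -i :=
    ⟨fun h => σ.injective (by rw [h, hσ, hσi]), by grind⟩
  refine ⟨⟨fun x => if x = i then b else if x = -i then -b else 0, fun x => ?_⟩, fun x => ?_, ?_⟩
  · dsimp only
    split_ifs <;> first | omega | simp
  · simp only [hσ_iff, hσ_neg_iff]
  · rw [← hb]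
    change (if i = i then b else _) - (if j = i then b else if j = -i then -b else 0) = _
    rw [if_pos rfl, if_neg hij]
    split_ifs <;> simp [two_nsmul]

lemma index_fixedOdd_step (hA : Odd (Nat.card A)) (hσ : σ ∈ BInf) (hi : σ i ≠ i) :
    (fixedOdd A σ).index = Nat.card A * (fixedOdd A (signedSwap i (σ i) * σ)).index := by
  have hi0 := ne_zero_of_apply_ne hσ hi
  have hle : fixedOdd A σ ≤ (evalSub A i (σ i)).ker := fun f hf =>
    mem_ker_evalSub.mpr (hf i).symm
  have htop := map_evalSub_fixedOdd_eq_top (A := A) hA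
    (mul_mem (signedSwap_apply_mem_BInf hσ hi) hσ).1 hi0 hi (signedSwap_mul_apply_self hσ hi)
  rw [← inf_eq_left.mpr hle,
    ← fixedOdd_signedSwap_mul_inf_ker hi0 (apply_ne_zero_of_mem_BInf hσ hi0),
    index_inf_ker_evalSub, htop, AddSubgroup.card_top]

lemma index_fixedOdd_ne_zero (hA : Odd (Nat.card A)) :
    ∀ σ ∈ BInf, (fixedOdd A σ).index ≠ 0 := by
  refine BInf_induction (by simp [fixedOdd_one]) fun σ hσ i hi ih => ?_
  rw [index_fixedOdd_step hA hσ hi]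
  exact mul_ne_zero hA.pos.ne' ih

/-- The codimension of the space of odd functions invariant under `σ`, read off from the index of
the invariants over `ℤ/3`; by `index_fixedOdd` any finite group of odd order gives the same. -/
def codim (σ : Perm ℤ) : ℕ := Nat.log 3 (fixedOdd (ZMod 3) σ).index

lemma codim_one : codim 1 = 0 := by simp [codim, fixedOdd_one]

lemma codim_signedSwap_apply_mul (hσ : σ ∈ BInf) (hi : σ i ≠ i) :
    codim (signedSwap i (σ i) * σ) + 1 = codim σ := by
  have hodd : Odd (Nat.card (ZMod 3)) := by rw [Nat.card_zmod]; decide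
  have hne := index_fixedOdd_ne_zero hodd _ (mul_mem (signedSwap_apply_mem_BInf hσ hi) hσ)
  rw [codim, codim, index_fixedOdd_step hodd hσ hi, Nat.card_zmod, mul_comm,
    Nat.log_mul_base (by norm_num) hne]

lemma index_fixedOdd (hA : Odd (Nat.card A)) :
    ∀ σ ∈ BInf, (fixedOdd A σ).index = Nat.card A ^ codim σ := by
  refine BInf_induction (by simp [fixedOdd_one, codim_one]) fun σ hσ i hi ih => ?_
  rw [index_fixedOdd_step hA hσ hi, ih, ← codim_signedSwap_apply_mul hσ hi, pow_succ']

lemma codim_eq_zero_iff (hσ : σ ∈ BInf) : codim σ = 0 ↔ σ = 1 := by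
  refine ⟨fun h => Equiv.ext fun i => not_not.mp fun hi => ?_, fun h => h ▸ codim_one⟩
  have := codim_signedSwap_apply_mul hσ hi
  omega

lemma codim_signedSwap_mul_le (hσ : σ ∈ BInf) (hi : i ≠ 0) (hj : j ≠ 0) :
    codim (signedSwap i j * σ) ≤ codim σ + 1 := by
  have hodd : Odd (Nat.card (ZMod 3)) := by rw [Nat.card_zmod]; decide
  have h := index_fixedOdd_signedSwap_mul_dvd (A := ZMod 3) hi hj σ
  rw [index_fixedOdd hodd _ hσ, index_fixedOdd hodd _ (mul_mem (signedSwap_mem_BInf hi hj) hσ),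
    Nat.card_zmod, ← pow_succ'] at h
  exact Nat.pow_dvd_pow_iff_le_right'.mp h

lemma codim_inv (σ : Perm ℤ) : codim σ⁻¹ = codim σ := by rw [codim, fixedOdd_inv, codim]

lemma codim_conj {g : Perm ℤ} (hg : g ∈ BInf) (σ : Perm ℤ) : codim (g * σ * g⁻¹) = codim σ := by
  rw [codim, fixedOdd_conj ⟨g, hg⟩ σ,
    AddSubgroup.index_comap_of_surjective _ (precomp_surjective _), codim]

lemma codim_mul_of_disjoint (hτ : τ ∈ BInf) :
    ∀ σ ∈ BInf, Perm.Disjoint σ τ → codim (σ * τ) = codim σ + codim τ := by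
  refine BInf_induction (by simp [codim_one]) fun σ hσ i hi ih hdisj => ?_
  have hτi : τ i = i := (hdisj i).resolve_left hi
  have hστi : (σ * τ) i = σ i := by rw [Perm.mul_apply, hτi]
  have hdisj' : Perm.Disjoint (signedSwap i (σ i) * σ) τ := fun x =>
    (hdisj x).imp_left fun hx => signedSwap_mul_apply_of_apply_eq hσ hi hx
  have hstep := codim_signedSwap_apply_mul (mul_mem hσ hτ) (i := i) (by rwa [hστi])
  rw [hστi, ← mul_assoc, ih hdisj'] at hstep
  rw [← hstep, ← codim_signedSwap_apply_mul hσ hi]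
  omega

end Codimension

section Signs

variable {n : ℕ} {σ τ : Perm ℤ} {i j : ℤ}

/-- `B(n)` permutes the absolute values `0, …, n`. -/
instance absAction (n : ℕ) : MulAction (BFin n) (Fin (n + 1)) where
  smul σ a := ⟨(σ.1 a).natAbs, by
    have := abs_apply_le σ.2 (i := a) (by rw [Int.abs_eq_natAbs]; omega)
    rw [Int.abs_eq_natAbs] at this
    omega⟩
  one_smul a := Fin.ext (Int.natAbs_natCast a)
  mul_smul σ τ a := Fin.ext <| by
    change (σ.1 (τ.1 a)).natAbs = (σ.1 (τ.1 a).natAbs).natAbs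
    rcases Int.natAbs_eq (τ.1 a) with h | h <;> rw [h] <;> simp [σ.2.1]

lemma val_absAction_smul (σ : BFin n) (a : Fin (n + 1)) :
    (σ • a : Fin (n + 1)).val = (σ.1 a).natAbs := rfl

/-- The sign character `g₁g₂⋯` of `B(∞)`: the parity of the number of positive integers made
negative. -/
def negSign (σ : Perm ℤ) : ℤˣ := (-1) ^ {i : ℤ | 0 < i ∧ σ i < 0}.ncard

lemma negSign_eq_prod (σ : BFin n) :
    negSign σ = ∏ a : Fin (n + 1), if σ.1 a < 0 then -1 else 1 := by
  rw [Finset.prod_ite, Finset.prod_const, Finset.prod_const_one, mul_one, negSign]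
  congr 1
  have hset : {i : ℤ | 0 < i ∧ σ.1 i < 0} =
      (fun a : Fin (n + 1) => (a : ℤ)) ''
        (Finset.univ.filter fun a : Fin (n + 1) => σ.1 a < 0) := by
    ext i
    simp only [Set.mem_ofPred_eq, Set.mem_image, Finset.coe_filter, Finset.mem_univ, true_and]
    constructor
    · rintro ⟨hi, hσi⟩
      have := abs_le.mp (abs_le_of_apply_ne σ.2 (i := i) (by omega))
      exact ⟨⟨i.toNat, by omega⟩, by simpa [hi.le] using hσi, by simp [hi.le]⟩
    · rintro ⟨a, ha, rfl⟩
      refine ⟨lt_of_le_of_ne (Int.natCast_nonneg a) fun h => ?_, ha⟩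
      rw [← h, apply_zero_of_mem_BInf (BFin_le_BInf σ.2)] at ha
      exact ha.ne rfl
  rw [hset, Set.ncard_image_of_injective _ fun a b h => Fin.ext (Int.ofNat_inj.mp h),
    Set.ncard_coe_finset]

lemma negSign_coe_mul (σ τ : BFin n) : negSign (σ * τ : BFin n) = negSign σ * negSign τ := by
  have key (a : Fin (n + 1)) : (if (σ * τ : BFin n).1 a < 0 then -1 else 1 : ℤˣ) =
      (if σ.1 (τ • a : Fin (n + 1)) < 0 then -1 else 1) * if τ.1 a < 0 then -1 else 1 := by
    rw [val_absAction_smul, Subgroup.coe_mul, Perm.mul_apply]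
    rcases lt_trichotomy (τ.1 a) 0 with h | h | h
    · have hne := apply_ne_zero_of_mem_BInf (BFin_le_BInf σ.2) h.ne
      rw [Int.ofNat_natAbs_of_nonpos h.le, σ.2.1]
      split_ifs <;> first | omega | rfl
    · simp [h, apply_zero_of_mem_BInf (BFin_le_BInf σ.2)]
    · rw [Int.natAbs_of_nonneg h.le, if_neg h.not_gt, mul_one]
  rw [negSign_eq_prod, negSign_eq_prod σ, negSign_eq_prod τ, Finset.prod_congr rfl fun a _ => key a,
    Finset.prod_mul_distrib]
  congr 1
  exact Equiv.prod_comp (MulAction.toPerm τ)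
    fun a : Fin (n + 1) => if σ.1 a < 0 then (-1 : ℤˣ) else 1

lemma negSign_mul (hσ : σ ∈ BInf) (hτ : τ ∈ BInf) : negSign (σ * τ) = negSign σ * negSign τ := by
  obtain ⟨n, hσn, hτn⟩ := exists_common_BFin hσ hτ
  exact negSign_coe_mul (⟨σ, hσn⟩ : BFin n) ⟨τ, hτn⟩

lemma negSign_one : negSign 1 = 1 := by
  have : {i : ℤ | 0 < i ∧ (1 : Perm ℤ) i < 0} = ∅ :=
    Set.eq_empty_of_forall_notMem fun _ hi => hi.1.not_gt hi.2
  rw [negSign, this, Set.ncard_empty, pow_zero]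

lemma mem_DInfSet_iff : σ ∈ DInfSet ↔ σ ∈ BInf ∧ negSign σ = 1 := by
  rw [negSign, neg_one_pow_eq_one_iff_even (by decide)]
  rfl

/-- The group `D(∞)`. -/
def DInf : Subgroup (Perm ℤ) where
  carrier := DInfSet
  mul_mem' := by
    simp only [mem_DInfSet_iff]
    rintro σ τ ⟨hσ, hσ1⟩ ⟨hτ, hτ1⟩
    exact ⟨mul_mem hσ hτ, by rw [negSign_mul hσ hτ, hσ1, hτ1, one_mul]⟩
  one_mem' := mem_DInfSet_iff.mpr ⟨one_mem _, negSign_one⟩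
  inv_mem' := by
    simp only [mem_DInfSet_iff]
    rintro σ ⟨hσ, hσ1⟩
    refine ⟨inv_mem hσ, ?_⟩
    have h := negSign_mul (inv_mem hσ) hσ
    rwa [inv_mul_cancel, negSign_one, hσ1, mul_one, eq_comm] at h

lemma mem_DInf : σ ∈ DInf ↔ σ ∈ BInf ∧ negSign σ = 1 := mem_DInfSet_iff

lemma DInf_le_BInf : DInf ≤ BInf := fun _ hσ => hσ.1

lemma negSign_signedSwap_of_abs_ne (hi : i ≠ 0) (hj : j ≠ 0) (hij : |i| ≠ |j|) :
    negSign (signedSwap i j) = 1 := by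
  have hset : {x : ℤ | 0 < x ∧ signedSwap i j x < 0} =
      if 0 < i ↔ 0 < j then ∅ else {|i|, |j|} := by
    ext x
    simp only [Set.mem_ofPred_eq, signedSwap_apply hi hj]
    rcases abs_cases i with ⟨hi', _⟩ | ⟨hi', _⟩ <;> rcases abs_cases j with ⟨hj', _⟩ | ⟨hj', _⟩ <;>
    split_ifs <;> grind
  rw [negSign, hset]
  split_ifs
  · rw [Set.ncard_empty, pow_zero]
  · rw [Set.ncard_pair hij]
    rfl

lemma negSign_signedSwap_neg (hi : i ≠ 0) : negSign (signedSwap i (-i)) = -1 := by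
  have hset : {x : ℤ | 0 < x ∧ signedSwap i (-i) x < 0} = {|i|} := by
    ext x
    simp only [Set.mem_ofPred_eq, signedSwap_apply hi (neg_ne_zero.mpr hi), Set.mem_singleton_iff]
    rcases abs_cases i with ⟨hi', _⟩ | ⟨hi', _⟩ <;> split_ifs <;> omega
  rw [negSign, hset, Set.ncard_singleton, pow_one]

lemma signedSwap_mem_DInf (hi : i ≠ 0) (hj : j ≠ 0) (hij : |i| ≠ |j|) : signedSwap i j ∈ DInf :=
  mem_DInf.mpr ⟨signedSwap_mem_BInf hi hj, negSign_signedSwap_of_abs_ne hi hj hij⟩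

/-- The determinant character of `B(n)`. -/
def detSign (n : ℕ) : BFin n →* ℤˣ where
  toFun σ := Perm.sign (MulAction.toPermHom (BFin n) (Fin (n + 1)) σ) * negSign σ
  map_one' := by rw [map_one, map_one, Subgroup.coe_one, negSign_one, one_mul]
  map_mul' σ τ := by rw [negSign_coe_mul, map_mul, map_mul, mul_mul_mul_comm]

lemma toPerm_signedSwap (hi : i ≠ 0) (hj : j ≠ 0) (h : signedSwap i j ∈ BFin n) (hin : |i| ≤ n)
    (hjn : |j| ≤ n) :
    MulAction.toPermHom (BFin n) (Fin (n + 1)) ⟨signedSwap i j, h⟩ =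
      swap (Fin.ofNat (n + 1) i.natAbs) (Fin.ofNat (n + 1) j.natAbs) := by
  rw [Int.abs_eq_natAbs, Int.ofNat_le] at hin hjn
  ext a
  rw [MulAction.toPermHom_apply, MulAction.toPerm_apply, val_absAction_smul,
    signedSwap_apply hi hj, swap_apply_def]
  simp only [Fin.ext_iff, Fin.ofNat, Nat.mod_eq_of_lt (Nat.lt_succ_of_le hin),
    Nat.mod_eq_of_lt (Nat.lt_succ_of_le hjn)]
  split_ifs <;> grind

lemma detSign_signedSwap (hi : i ≠ 0) (hj : j ≠ 0) (hij : i ≠ j) (h : signedSwap i j ∈ BFin n)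
    (hin : |i| ≤ n) (hjn : |j| ≤ n) : detSign n ⟨signedSwap i j, h⟩ = -1 := by
  change Perm.sign (MulAction.toPermHom _ _ _) * negSign (signedSwap i j) = -1
  rw [toPerm_signedSwap hi hj h hin hjn]
  by_cases habs : |i| = |j|
  · obtain rfl : i = -j := (abs_eq_abs.mp habs).resolve_left hij
    have := negSign_signedSwap_neg hi
    rw [neg_neg] at this
    rw [this, Int.natAbs_neg, swap_self, Perm.sign_refl, one_mul]
  · rw [negSign_signedSwap_of_abs_ne hi hj habs, mul_one, Perm.sign_swap]
    rw [Int.abs_eq_natAbs, Int.ofNat_le] at hin hjn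
    rw [Int.abs_eq_natAbs, Int.abs_eq_natAbs, Int.ofNat_inj] at habs
    simpa only [ne_eq, Fin.ext_iff, Fin.ofNat, Nat.mod_eq_of_lt (Nat.lt_succ_of_le hin),
      Nat.mod_eq_of_lt (Nat.lt_succ_of_le hjn)]

lemma neg_one_pow_codim (n : ℕ) :
    ∀ σ ∈ BInf, ∀ h : σ ∈ BFin n, (-1) ^ codim σ = detSign n ⟨σ, h⟩ := by
  refine BInf_induction (fun h => ?_) fun σ hσ i hi ih h => ?_
  · rw [codim_one, pow_zero]
    exact (map_one _).symm
  · have hi0 := ne_zero_of_apply_ne hσ hi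
    have hσi0 := apply_ne_zero_of_mem_BInf hσ hi0
    have hin := abs_le_of_apply_ne h hi
    have hσin := abs_apply_le h hin
    have hswap : signedSwap i (σ i) ∈ BFin n := signedSwap_mem_BFin hi0 hσi0 hin hσin
    have hdet : detSign n ⟨signedSwap i (σ i) * σ, mul_mem hswap h⟩ = -1 * detSign n ⟨σ, h⟩ := by
      rw [← detSign_signedSwap hi0 hσi0 hi.symm hswap hin hσin, ← map_mul]
      rfl
    rw [← codim_signedSwap_apply_mul hσ hi, pow_succ, ih (mul_mem hswap h), hdet]
    simp

lemma neg_one_pow_codim_mul {R : Type*} [Ring R] (hσ : σ ∈ BInf) (hτ : τ ∈ BInf) :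
    (-1 : R) ^ codim (σ * τ) = (-1) ^ codim σ * (-1) ^ codim τ := by
  obtain ⟨n, hσn, hτn⟩ := exists_common_BFin hσ hτ
  have h : (-1 : ℤˣ) ^ codim (σ * τ) = (-1) ^ codim σ * (-1) ^ codim τ := by
    rw [neg_one_pow_codim n _ (mul_mem hσ hτ) (mul_mem hσn hτn), neg_one_pow_codim n _ hσ hσn,
      neg_one_pow_codim n _ hτ hτn, ← map_mul]
    rfl
  simpa using congr_arg (fun u : ℤˣ => ((u : ℤ) : R)) h

end Signs

section ReflectionLength

variable {σ : Perm ℤ} {i j : ℤ}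

lemma signedSwap_neg_mul_signedSwap_neg (hi : i ≠ 0) (hj : j ≠ 0) (hij : |i| ≠ |j|) :
    signedSwap j (-j) * signedSwap i (-i) = signedSwap i (-j) * signedSwap i j := by
  have hij₁ : i ≠ j := fun h => hij (by rw [h])
  have hij₂ : i ≠ -j := fun h => hij (by rw [h, abs_neg])
  ext x
  simp only [Perm.mul_apply, signedSwap_apply hi hj, signedSwap_apply hi (neg_ne_zero.mpr hj),
    signedSwap_apply hi (neg_ne_zero.mpr hi), signedSwap_apply hj (neg_ne_zero.mpr hj)]
  split_ifs <;> omega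

lemma codim_signedSwap_mul_of_neg_of_neg (hσ : σ ∈ BInf) (hi : i ≠ 0) (hj : j ≠ 0)
    (hij : |i| ≠ |j|) (hσi : σ i = -i) (hσj : σ j = -j) :
    codim (signedSwap i j * σ) + 1 = codim σ := by
  have hij₁ : j ≠ i := fun h => hij (by rw [h])
  have hij₂ : -j ≠ i := fun h => hij (by rw [← h, abs_neg])
  have hi' := neg_ne_zero.mpr hi
  have long_apply : (signedSwap i j * σ) i = -j := by
    rw [Perm.mul_apply, hσi, signedSwap_apply hi hj]
    split_ifs <;> omega
  have short_apply : (signedSwap i (-i) * σ) j = -j := by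
    rw [Perm.mul_apply, hσj, signedSwap_apply hi hi']
    split_ifs <;> omega
  have h₁ := codim_signedSwap_apply_mul hσ (i := i) (by omega)
  have h₂ :=
    codim_signedSwap_apply_mul (mul_mem (signedSwap_mem_BInf hi hi') hσ) (i := j) (by omega)
  have h₃ :=
    codim_signedSwap_apply_mul (mul_mem (signedSwap_mem_BInf hi hj) hσ) (i := i) (by omega)
  rw [hσi] at h₁
  rw [short_apply, ← mul_assoc, signedSwap_neg_mul_signedSwap_neg hi hj hij, mul_assoc] at h₂
  rw [long_apply] at h₃
  omega

lemma exists_neg_pair_of_mem_DInf (hσ : σ ∈ DInf) (hne : σ ≠ 1) (habs : ∀ i, |σ i| = |i|) :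
    ∃ i j : ℤ, 0 < i ∧ 0 < j ∧ i ≠ j ∧ σ i = -i ∧ σ j = -j := by
  have apply_eq {i : ℤ} (hi : 0 < i ∧ σ i < 0) : σ i = -i :=
    (abs_eq_abs.mp (habs i)).resolve_left (by omega)
  have hfin : {i : ℤ | 0 < i ∧ σ i < 0}.Finite :=
    hσ.1.2.subset fun i (hi : 0 < i ∧ σ i < 0) => by simp only [Set.mem_ofPred_eq]; omega
  obtain ⟨i, hi⟩ : ∃ i, 0 < i ∧ σ i < 0 := by
    obtain ⟨k, hk⟩ : ∃ k, σ k ≠ k := not_forall.mp fun h => hne (Equiv.ext h)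
    have hk0 := ne_zero_of_apply_ne (DInf_le_BInf hσ) hk
    have hσk : σ k = -k := (abs_eq_abs.mp (habs k)).resolve_left hk
    rcases lt_or_gt_of_ne hk0 with h | h
    · exact ⟨-k, by omega, by rw [hσ.1.1, hσk]; omega⟩
    · exact ⟨k, h, by omega⟩
  have hpos := (Set.ncard_pos hfin).mpr ⟨i, hi⟩
  have hcard : 1 < {i : ℤ | 0 < i ∧ σ i < 0}.ncard := by
    have := hσ.2
    grind
  obtain ⟨a, ha, b, hb, hab⟩ := (Set.one_lt_ncard hfin).mp hcard
  exact ⟨a, b, ha.1, hb.1, hab, apply_eq ha, apply_eq hb⟩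

lemma exists_isLongRefl_codim_mul (hσ : σ ∈ DInf) (hne : σ ≠ 1) :
    ∃ r, IsLongRefl r ∧ codim (r * σ) + 1 = codim σ := by
  have hσB := DInf_le_BInf hσ
  by_cases habs : ∀ i, |σ i| = |i|
  · obtain ⟨i, j, hi, hj, hij, hσi, hσj⟩ := exists_neg_pair_of_mem_DInf hσ hne habs
    have hij' : |i| ≠ |j| := by rwa [abs_of_pos hi, abs_of_pos hj]
    exact ⟨_, isLongRefl_iff.mpr ⟨i, j, hi.ne', hj.ne', hij', rfl⟩,
      codim_signedSwap_mul_of_neg_of_neg hσB hi.ne' hj.ne' hij' hσi hσj⟩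
  · obtain ⟨i, hi⟩ := not_forall.mp habs
    have hσi : σ i ≠ i := fun h => hi (by rw [h])
    have hi0 := ne_zero_of_apply_ne hσB hσi
    exact ⟨_, isLongRefl_iff.mpr ⟨i, σ i, hi0, apply_ne_zero_of_mem_BInf hσB hi0, Ne.symm hi, rfl⟩,
      codim_signedSwap_apply_mul hσB hσi⟩

lemma exists_isLongRefl_list_prod (hσ : σ ∈ DInf) :
    ∃ l : List (Perm ℤ), (∀ r ∈ l, IsLongRefl r) ∧ l.length = codim σ ∧ l.prod = σ := by
  induction hk : codim σ generalizing σ with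
  | zero => exact ⟨[], by simp, rfl, ((codim_eq_zero_iff (DInf_le_BInf hσ)).mp hk).symm⟩
  | succ k ih =>
    have hne : σ ≠ 1 := by
      rintro rfl
      simp [codim_one] at hk
    obtain ⟨r, hr, hcodim⟩ := exists_isLongRefl_codim_mul hσ hne
    obtain ⟨i, j, hi, hj, hij, rfl⟩ := isLongRefl_iff.mp hr
    obtain ⟨l, hl, hlen, hprod⟩ := ih (mul_mem (signedSwap_mem_DInf hi hj hij) hσ) (by omega)
    exact ⟨signedSwap i j :: l, List.forall_mem_cons.mpr ⟨hr, hl⟩, by rw [List.length_cons, hlen],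
      by rw [List.prod_cons, hprod, signedSwap_mul_cancel_left hi hj]⟩

lemma list_prod_mem_BInf_and_codim_le_length (l : List (Perm ℤ)) (hl : ∀ r ∈ l, IsLongRefl r) :
    l.prod ∈ BInf ∧ codim l.prod ≤ l.length := by
  induction l with
  | nil => exact ⟨one_mem _, codim_one.le⟩
  | cons r l ih =>
    obtain ⟨hr, hl'⟩ := List.forall_mem_cons.mp hl
    obtain ⟨i, j, hi, hj, -, rfl⟩ := isLongRefl_iff.mp hr
    obtain ⟨hmem, hle⟩ := ih hl'
    exact ⟨mul_mem (signedSwap_mem_BInf hi hj) hmem,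
      (codim_signedSwap_mul_le hmem hi hj).trans (Nat.succ_le_succ hle)⟩

theorem reflLenD_eq_codim (hσ : σ ∈ DInf) : reflLenD σ = codim σ := by
  obtain ⟨l, hl, hlen, hprod⟩ := exists_isLongRefl_list_prod hσ
  have hmem : codim σ ∈ {k : ℕ | ∃ r : Fin k → Perm ℤ,
      (∀ t, IsLongRefl (r t)) ∧ (List.ofFn r).prod = σ} :=
    hlen ▸ ⟨l.get, fun t => hl _ (l.get_mem t), by rw [List.ofFn_get, hprod]⟩
  refine (Nat.sInf_le hmem).antisymm (le_csInf ⟨_, hmem⟩ ?_)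
  rintro k ⟨r, hr, rfl⟩
  simpa using (list_prod_mem_BInf_and_codim_le_length (List.ofFn r) (by simpa using hr)).2

end ReflectionLength

section Sufficiency

lemma isPosDefOn_zero_pow_codim :
    IsPosDefOn (BInf : Set (Perm ℤ)) (fun σ => (0 : ℂ) ^ codim σ) := by
  classical
  refine (isPosDefOn_congr fun σ hσ => ?_).mpr isPosDefOn_single_one
  simp only [zero_pow_eq, codim_eq_zero_iff hσ]

lemma isPosDefOn_inv_card_pow_codim {A : Type*} [AddCommGroup A] (hA : Odd (Nat.card A)) :
    IsPosDefOn (BInf : Set (Perm ℤ)) (fun σ => (Nat.card A : ℂ)⁻¹ ^ codim σ) := by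
  intro k g hg z
  let u (i : Fin k) := precomp A ⟨g i, hg i⟩⁻¹
  have hmem (i j : Fin k) : (g j)⁻¹ * g i ∈ BInf := mul_mem (inv_mem (hg j)) (hg i)
  have eqLocus_u (i j : Fin k) : (u i).eqLocus (u j) = fixedOdd A ((g j)⁻¹ * g i) :=
    eqLocus_precomp_inv _ _
  have h := sum_inv_index_eqLocus_nonneg u
    (fun i j => ⟨by rw [eqLocus_u]; exact index_fixedOdd_ne_zero hA _ (hmem i j)⟩) z
  simpa only [eqLocus_u, index_fixedOdd hA _ (hmem _ _), Nat.cast_pow, inv_pow] using h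

lemma IsPosDefOn.neg_pow_codim {H : Subgroup (Perm ℤ)} (hH : H ≤ BInf) {q : ℂ}
    (hq : IsPosDefOn (H : Set (Perm ℤ)) (fun σ => q ^ codim σ)) :
    IsPosDefOn (H : Set (Perm ℤ)) (fun σ => (-q) ^ codim σ) := by
  simp only [neg_pow q]
  refine hq.mul_twist fun g hg h hh => ?_
  rw [neg_one_pow_codim_mul (inv_mem (hH hg)) (hH hh), codim_inv, map_pow, map_neg, map_one]

theorem isPosDefOn_inv_odd_pow_codim (N : ℤ) :
    IsPosDefOn (BInf : Set (Perm ℤ)) (fun σ => (1 / (2 * (N : ℂ) + 1)) ^ codim σ) := by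
  have pos_case (n : ℕ) : IsPosDefOn (BInf : Set (Perm ℤ))
      (fun σ => (1 / (2 * (n : ℂ) + 1)) ^ codim σ) := by
    have h := isPosDefOn_inv_card_pow_codim (A := ZMod (2 * n + 1)) (by simp)
    simpa only [Nat.card_zmod, Nat.cast_add, Nat.cast_mul, Nat.cast_ofNat, Nat.cast_one,
      one_div] using h
  obtain ⟨n, rfl | rfl⟩ : ∃ n : ℕ, N = n ∨ N = -(n + 1) := by
    rcases N with n | n
    · exact ⟨n, .inl rfl⟩
    · exact ⟨n, .inr (Int.negSucc_eq n)⟩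
  · simpa only [Int.cast_natCast] using pos_case n
  · have h := (pos_case n).neg_pow_codim le_rfl
    rw [← div_neg] at h
    convert h using 4
    push_cast
    ring

end Sufficiency

section Characters

variable {q : ℂ} {σ : Perm ℤ}

lemma reflFunD_apply (hσ : σ ∈ DInf) : reflFunD q σ = q ^ codim σ := by
  rw [reflFunD, if_pos (show σ ∈ DInfSet from hσ), reflLenD_eq_codim hσ]

lemma isPosDefOn_pow_reflLenD_iff :
    IsPosDefOn DInfSet (fun σ => q ^ reflLenD σ) ↔
      IsPosDefOn (DInf : Set (Perm ℤ)) (fun σ => q ^ codim σ) :=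
  isPosDefOn_congr (H := DInf) fun σ hσ => by rw [reflLenD_eq_codim hσ]

lemma reflFunD_mem_CharSetD_iff :
    reflFunD q ∈ CharSetD ↔ IsPosDefOn (DInf : Set (Perm ℤ)) (fun σ => q ^ codim σ) := by
  have hcongr : IsPosDefOn DInfSet (reflFunD q) ↔ _ :=
    isPosDefOn_congr (H := DInf) fun σ hσ => reflFunD_apply hσ
  refine ⟨fun h => hcongr.mp h.2.2.1, fun h => ⟨fun σ hσ => if_neg hσ, ?_, hcongr.mpr h, ?_⟩⟩
  · intro g hg h hh
    rw [reflFunD_apply hg, reflFunD_apply (DInf.mul_mem (DInf.mul_mem hh hg) (DInf.inv_mem hh)),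
      codim_conj (DInf_le_BInf hh)]
  · rw [reflFunD_apply (one_mem _), codim_one, pow_zero]

end Characters

section Extremality

lemma eq_of_convexComb_normSq_le {x y : ℂ} {a b : ℝ} (ha : 0 < a) (hb : 0 < b) (hab : a + b = 1)
    (h : a * Complex.normSq x + b * Complex.normSq y ≤ Complex.normSq (a * x + b * y)) :
    x = y := by
  have defect : a * Complex.normSq x + b * Complex.normSq y - Complex.normSq (a * x + b * y) =
      a * b * Complex.normSq (x - y) := by
    obtain rfl : b = 1 - a := by linarith
    simp only [Complex.normSq_apply, Complex.add_re, Complex.add_im, Complex.sub_re, Complex.sub_im,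
      Complex.re_ofReal_mul, Complex.im_ofReal_mul]
    ring
  have hxy : Complex.normSq (x - y) ≤ 0 := nonpos_of_mul_nonpos_right (by linarith) (mul_pos ha hb)
  exact sub_eq_zero.mp (Complex.normSq_eq_zero.mp (hxy.antisymm (Complex.normSq_nonneg _)))

lemma le_of_forall_sq_mul_le {x p : ℝ}
    (h : ∀ k : ℕ, (k : ℝ) ^ 2 * x ≤ k + ((k : ℝ) ^ 2 - k) * p) : x ≤ p := by
  by_contra! hpx
  obtain ⟨k, hk⟩ := exists_nat_gt ((1 - p) / (x - p))
  rw [div_lt_iff₀ (sub_pos.mpr hpx)] at hk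
  have hk1 := h (k + 1)
  push_cast at hk1
  have : ((k : ℝ) + 1) * ((k + 1) * (x - p)) ≤ (k + 1) * (1 - p) := by linarith
  have := le_of_mul_le_mul_left this (by positivity)
  linarith

lemma sum_sum_offDiag_eq {R : Type*} [CommRing R] {ι : Type*} [Fintype ι] {f : ι → ι → R} {p : R}
    (hdiag : ∀ i, f i i = 1) (hoff : ∀ i j, i ≠ j → f i j = p) :
    ∑ i, ∑ j, f i j = Fintype.card ι + ((Fintype.card ι : R) ^ 2 - Fintype.card ι) * p := by
  classical
  have hf (i j : ι) : f i j = (if i = j then 1 - p else 0) + p := by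
    split_ifs with h
    · rw [← h, hdiag, sub_add_cancel]
    · rw [hoff i j h, zero_add]
  simp only [hf, Finset.sum_add_distrib, Finset.sum_ite_eq, Finset.mem_univ, if_true,
    Finset.sum_const, Finset.card_univ, nsmul_eq_mul]
  ring

lemma sq_mul_normSq_le_of_mem_CharSetD {f : Perm ℤ → ℂ} (hf : f ∈ CharSetD) {σ : Perm ℤ}
    (hσ : σ ∈ DInf) {τ : ℕ → Perm ℤ} (hτ : ∀ t, ∃ g ∈ DInf, τ t = g * σ * g⁻¹) (k : ℕ) :
    (k : ℝ) ^ 2 * Complex.normSq (f σ) ≤ (∑ s : Fin k, ∑ t : Fin k, f ((τ t)⁻¹ * τ s)).re := by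
  choose g hg hτ using hτ
  have h := hf.2.2.1.sq_card_mul_normSq_le (one_mem DInf) hf.2.2.2 (τ := fun t : Fin k => τ t)
    (c := f σ) (fun t => hτ t ▸ mul_mem (mul_mem (hg t) hσ) (inv_mem (hg t)))
    (fun t => by rw [hτ, hf.2.1 σ hσ _ (hg t)])
  rw [Fintype.card_fin] at h
  exact_mod_cast (Complex.le_def.mp h).1

/-- Cauchy–Schwarz on `k` conjugates of `σ` gives `a|f₁ σ|² + b|f₂ σ|² ≤ |φ σ|² + O(1/k)` for every
decomposition `φ = a f₁ + b f₂`, so strict convexity of `|·|²` forces `f₁ = f₂`. -/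
theorem mem_extremePoints_CharSetD {φ : Perm ℤ → ℂ} (hφ : φ ∈ CharSetD)
    (h : ∀ σ ∈ DInf, ∃ τ : ℕ → Perm ℤ, (∀ t, ∃ g ∈ DInf, τ t = g * σ * g⁻¹) ∧
      ∀ s t, s ≠ t → φ ((τ t)⁻¹ * τ s) = Complex.normSq (φ σ)) :
    φ ∈ Set.extremePoints ℝ CharSetD := by
  refine ⟨hφ, ?_⟩
  rintro f₁ hf₁ f₂ hf₂ ⟨a, b, ha, hb, hab, rfl⟩
  funext σ
  by_cases hσ : σ ∈ DInfSet
  swap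
  · rw [hf₁.1 σ hσ, hφ.1 σ hσ]
  obtain ⟨τ, hτ, hoff⟩ := h σ hσ
  have hle : a * Complex.normSq (f₁ σ) + b * Complex.normSq (f₂ σ) ≤
      Complex.normSq ((a • f₁ + b • f₂) σ) := by
    refine le_of_forall_sq_mul_le fun k => ?_
    have hsum := sum_sum_offDiag_eq (ι := Fin k)
      (f := fun s t => (a • f₁ + b • f₂) ((τ t)⁻¹ * τ s)) (fun s => by simpa using hφ.2.2.2)
      (fun s t hst => hoff s t (Fin.val_ne_of_ne hst))
    rw [Fintype.card_fin] at hsum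
    simp only [Pi.add_apply, Pi.smul_apply, Complex.real_smul, Finset.sum_add_distrib,
      ← Finset.mul_sum] at hsum ⊢
    set p := Complex.normSq (a * f₁ σ + b * f₂ σ)
    have hre := congr_arg Complex.re
      (show _ = ((k + ((k : ℝ) ^ 2 - k) * p : ℝ) : ℂ) by push_cast; exact hsum)
    rw [Complex.add_re, Complex.re_ofReal_mul, Complex.re_ofReal_mul, Complex.ofReal_re] at hre
    have h₁ := mul_le_mul_of_nonneg_left (sq_mul_normSq_le_of_mem_CharSetD hf₁ hσ hτ k) ha.le
    have h₂ := mul_le_mul_of_nonneg_left (sq_mul_normSq_le_of_mem_CharSetD hf₂ hσ hτ k) hb.le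
    linarith
  have heq : f₁ σ = f₂ σ := eq_of_convexComb_normSq_le ha hb hab (by simpa using hle)
  simp only [Pi.add_apply, Pi.smul_apply, ← heq, ← add_smul, hab, one_smul]

/-- Exchanges the block `{1, …, n}` with `{d + 1, …, d + n}`, and `{-n, …, -1}` accordingly; an
involution when `n ≤ d`. -/
def blockSwapFun (n : ℕ) (d x : ℤ) : ℤ :=
  if 1 ≤ x ∧ x ≤ n then x + d
  else if d + 1 ≤ x ∧ x ≤ d + n then x - d
  else if -n ≤ x ∧ x ≤ -1 then x - d
  else if -(d + n) ≤ x ∧ x ≤ -(d + 1) then x + d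
  else x

variable {n : ℕ} {d : ℤ}

lemma blockSwapFun_involutive (h : (n : ℤ) ≤ d) : Function.Involutive (blockSwapFun n d) := by
  intro x
  unfold blockSwapFun
  split_ifs <;> omega

/-- The permutation `blockSwapFun n d`. -/
def blockSwap (h : (n : ℤ) ≤ d) : Perm ℤ := Function.Involutive.toPerm _ (blockSwapFun_involutive h)

lemma blockSwap_apply (h : (n : ℤ) ≤ d) (x : ℤ) : blockSwap h x = blockSwapFun n d x := rfl

lemma blockSwap_mem_DInf (h : (n : ℤ) ≤ d) : blockSwap h ∈ DInf := by
  refine ⟨⟨fun x => ?_, (Set.finite_Icc (-(d + n)) (d + n)).subset fun x hx => ?_⟩, ?_⟩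
  · simp only [blockSwap_apply, blockSwapFun]
    split_ifs <;> omega
  · contrapose! hx
    simp only [Set.mem_Icc, not_and_or, Set.mem_ofPred_eq, not_not,
      blockSwap_apply, blockSwapFun] at hx ⊢
    split_ifs <;> omega
  · have : {x : ℤ | 0 < x ∧ blockSwap h x < 0} = ∅ := by
      refine Set.eq_empty_of_forall_notMem fun x hx => ?_
      simp only [Set.mem_ofPred_eq, blockSwap_apply, blockSwapFun] at hx
      split_ifs at hx <;> omega
    simp [this]

lemma abs_mem_Ioc_of_blockSwap_conj_apply_ne (h : (n : ℤ) ≤ d) {σ : Perm ℤ} (hσ : σ ∈ BFin n)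
    {x : ℤ} (hx : (blockSwap h * σ * (blockSwap h)⁻¹) x ≠ x) :
    |x| ∈ Set.Ioc d (d + n) := by
  obtain ⟨y, rfl⟩ := (blockSwap h).surjective x
  have hy : σ y ≠ y := fun h' => hx (by simp [h'])
  have hy_le := abs_le_of_apply_ne hσ hy
  have hy0 := ne_zero_of_apply_ne (BFin_le_BInf hσ) hy
  simp only [Set.mem_Ioc, blockSwap_apply, blockSwapFun]
  grind

lemma exists_pairwise_disjoint_conj {σ : Perm ℤ} (hσ : σ ∈ BInf) :
    ∃ τ : ℕ → Perm ℤ, (∀ t, ∃ g ∈ DInf, τ t = g * σ * g⁻¹) ∧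
      ∀ s t, s ≠ t → Perm.Disjoint (τ s) (τ t) := by
  obtain ⟨n, hn⟩ := exists_mem_BFin hσ
  have hd (t : ℕ) : (n : ℤ) ≤ (t + 1) * n := by nlinarith
  refine ⟨fun t => _, fun t => ⟨_, blockSwap_mem_DInf (hd t), rfl⟩, fun s t hst x => ?_⟩
  by_contra! hx
  obtain ⟨hs₁, hs₂⟩ := abs_mem_Ioc_of_blockSwap_conj_apply_ne (hd s) hn hx.1
  obtain ⟨ht₁, ht₂⟩ := abs_mem_Ioc_of_blockSwap_conj_apply_ne (hd t) hn hx.2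
  rcases Nat.lt_or_gt_of_ne hst with hlt | hlt <;> zify at hlt <;> nlinarith

theorem reflFunD_mem_extremePoints {q : ℂ} (hq : conj q = q) (hchar : reflFunD q ∈ CharSetD) :
    reflFunD q ∈ Set.extremePoints ℝ CharSetD := by
  refine mem_extremePoints_CharSetD hchar fun σ hσ => ?_
  obtain ⟨τ, hτ, hdisj⟩ := exists_pairwise_disjoint_conj (DInf_le_BInf hσ)
  have mem_DInf_and_codim (t : ℕ) : τ t ∈ DInf ∧ codim (τ t) = codim σ := by
    obtain ⟨g, hg, h⟩ := hτ t
    exact h ▸ ⟨mul_mem (mul_mem hg hσ) (inv_mem hg), codim_conj (DInf_le_BInf hg) σ⟩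
  refine ⟨τ, hτ, fun s t hst => ?_⟩
  obtain ⟨hs, hsc⟩ := mem_DInf_and_codim s
  obtain ⟨ht, htc⟩ := mem_DInf_and_codim t
  rw [reflFunD_apply (mul_mem (inv_mem ht) hs), codim_mul_of_disjoint (DInf_le_BInf hs) _
    (inv_mem (DInf_le_BInf ht)) (hdisj t s hst.symm).inv_left, codim_inv, hsc, htc, pow_add,
    reflFunD_apply hσ, Complex.normSq_eq_conj_mul_self, map_pow, hq]

end Extremality

section GeneratingFunctions

/-- The signed letters `±1, …, ±n` permuted by `B(n)`. -/
def signedLetters (n : ℕ) : Finset ℤ := (Finset.Icc (-(n : ℤ)) n).erase 0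

variable {n : ℕ} {j : ℤ} {g : Perm ℤ}

lemma mem_signedLetters : j ∈ signedLetters n ↔ j ≠ 0 ∧ |j| ≤ n := by
  simp [signedLetters, abs_le]

lemma card_signedLetters (n : ℕ) : (signedLetters n).card = 2 * n := by
  rw [signedLetters, Finset.card_erase_of_mem (by simp), Int.card_Icc]
  omega

lemma signedLetters_succ (n : ℕ) :
    signedLetters (n + 1) = insert (n + 1 : ℤ) (insert (-(n + 1 : ℤ)) (signedLetters n)) := by
  ext j
  simp only [Finset.mem_insert, mem_signedLetters]
  grind

lemma signedSwap_succ_mem_BFin (hj : j ∈ signedLetters (n + 1)) :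
    signedSwap (n + 1) j ∈ BFin (n + 1) :=
  signedSwap_mem_BFin (by omega) (mem_signedLetters.mp hj).1 (by grind) (mem_signedLetters.mp hj).2

lemma signedSwap_succ_mul_apply_succ (hg : g ∈ BFin n) (hj : j ≠ 0) :
    (signedSwap (n + 1) j * g) (n + 1) = j := by
  rw [Perm.mul_apply, hg.2 _ (by grind), signedSwap_apply (by omega) hj, if_pos rfl]

lemma signedSwap_succ_mul_mem_BFin (hg : g ∈ BFin (n + 1)) :
    signedSwap (n + 1) (g (n + 1)) * g ∈ BFin n := by
  have hgB := BFin_le_BInf hg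
  have hn0 : (n + 1 : ℤ) ≠ 0 := by omega
  have hmem : signedSwap (n + 1) (g (n + 1)) ∈ BFin (n + 1) :=
    signedSwap_succ_mem_BFin
      (mem_signedLetters.mpr ⟨apply_ne_zero_of_mem_BInf hgB hn0, abs_apply_le hg (by grind)⟩)
  have hfix : (signedSwap (n + 1) (g (n + 1)) * g) (n + 1) = n + 1 := by
    rw [Perm.mul_apply, signedSwap_apply hn0 (apply_ne_zero_of_mem_BInf hgB hn0)]
    split_ifs <;> omega
  refine ⟨(mul_mem hmem hg).1, fun i hi => ?_⟩
  rcases lt_or_eq_of_le (show ((n + 1 : ℕ) : ℤ) ≤ |i| by omega) with h | h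
  · exact (mul_mem hmem hg).2 i h
  · rcases abs_eq (by omega) |>.mp h.symm with rfl | rfl
    · exact_mod_cast hfix
    · rw [(mul_mem hmem hg).1]
      exact_mod_cast congr_arg Neg.neg hfix

/-- Coset decomposition of `B(n + 1)` modulo `B(n)`, by the image of `n + 1`. -/
def BFinSuccEquiv (n : ℕ) : signedLetters (n + 1) × BFin n ≃ BFin (n + 1) where
  toFun p := ⟨signedSwap (n + 1) p.1 * p.2,
    mul_mem (signedSwap_succ_mem_BFin p.1.2) (BFin_mono n.le_succ p.2.2)⟩
  invFun g := (⟨g.1 (n + 1), mem_signedLetters.mpr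
      ⟨apply_ne_zero_of_mem_BInf (BFin_le_BInf g.2) (by omega), abs_apply_le g.2 (by grind)⟩⟩,
    ⟨signedSwap (n + 1) (g.1 (n + 1)) * g, signedSwap_succ_mul_mem_BFin g.2⟩)
  left_inv p := by
    have hp := (mem_signedLetters.mp p.1.2).1
    have h := signedSwap_succ_mul_apply_succ p.2.2 hp
    refine Prod.ext (Subtype.ext h) (Subtype.ext ?_)
    change signedSwap _ ((signedSwap _ _ * p.2.1) _) * (signedSwap _ _ * p.2.1) = p.2.1
    rw [h, signedSwap_mul_cancel_left (by omega) hp]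
  right_inv g := Subtype.ext <| signedSwap_mul_cancel_left (by omega)
    (apply_ne_zero_of_mem_BInf (BFin_le_BInf g.2) (by omega)) _

lemma BFin_zero : BFin 0 = ⊥ := by
  refine (Subgroup.eq_bot_iff_forall _).mpr fun σ hσ => Equiv.ext fun i => ?_
  rcases eq_or_ne i 0 with rfl | hi
  · exact apply_zero_of_mem_BInf (BFin_le_BInf hσ)
  · exact hσ.2 i (by simpa using hi)

instance finite_BFin (n : ℕ) : Finite (BFin n) := by
  induction n with
  | zero => rw [BFin_zero]; infer_instance
  | succ n ih => exact Finite.of_equiv _ (BFinSuccEquiv n)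

instance fintypeBFin (n : ℕ) : Fintype (BFin n) := Fintype.ofFinite _

lemma codim_signedSwap_succ_mul (hg : g ∈ BFin n) (hj : j ∈ signedLetters (n + 1))
    (hjn : j ≠ n + 1) : codim (signedSwap (n + 1) j * g) = codim g + 1 := by
  have hj0 := (mem_signedLetters.mp hj).1
  have happly := signedSwap_succ_mul_apply_succ hg hj0
  have h := codim_signedSwap_apply_mul (i := n + 1)
    (BFin_le_BInf (mul_mem (signedSwap_succ_mem_BFin hj) (BFin_mono n.le_succ hg)))
    (by rwa [happly])
  rw [← h, happly, signedSwap_mul_cancel_left (by omega) hj0]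

variable {R : Type*} [CommRing R]

lemma sum_BFin_eq_prod {w : Perm ℤ → R} {a b : R} (one : w 1 = 1)
    (short : ∀ n : ℕ, ∀ g ∈ BFin n, w (signedSwap (n + 1) (-(n + 1)) * g) = a * w g)
    (long : ∀ n : ℕ, ∀ g ∈ BFin n, ∀ j ∈ signedLetters n, w (signedSwap (n + 1) j * g) = b * w g)
    (n : ℕ) : ∑ g : BFin n, w g = ∏ i ∈ Finset.range n, (1 + a + 2 * i * b) := by
  induction n with
  | zero =>
    have : Subsingleton (BFin 0) := by rw [BFin_zero]; infer_instance
    rw [Fintype.sum_subsingleton _ (1 : BFin 0), Subgroup.coe_one, one, Finset.prod_range_zero]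
  | succ n ih =>
    have hnotMem : (n + 1 : ℤ) ∉ insert (-(n + 1 : ℤ)) (signedLetters n) := by
      simp only [Finset.mem_insert, mem_signedLetters]; grind
    have hnotMem' : -(n + 1 : ℤ) ∉ signedLetters n := by
      simp only [mem_signedLetters]; grind
    have hlong (j : ℤ) (hj : j ∈ signedLetters n) :
        ∑ g : BFin n, w (signedSwap (n + 1) j * g) = b * ∑ g : BFin n, w g := by
      rw [Finset.mul_sum]
      exact Finset.sum_congr rfl fun g _ => long n g g.2 j hj
    calc ∑ g : BFin (n + 1), w g
        = ∑ j ∈ signedLetters (n + 1), ∑ g : BFin n, w (signedSwap (n + 1) j * g) := by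
          rw [← (BFinSuccEquiv n).sum_comp, Fintype.sum_prod_type]
          exact Finset.sum_coe_sort _ fun j => ∑ g : BFin n, w (signedSwap (n + 1) j * g)
      _ = (1 + a + 2 * n * b) * ∑ g : BFin n, w g := by
          rw [signedLetters_succ, Finset.sum_insert hnotMem, Finset.sum_insert hnotMem',
            Finset.sum_congr rfl hlong]
          simp only [signedSwap_self, one_mul, short n _ (Subtype.prop _), ← Finset.mul_sum,
            Finset.sum_const, card_signedLetters, nsmul_eq_mul]
          push_cast
          ring
      _ = _ := by rw [ih, Finset.prod_range_succ, mul_comm]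

lemma neg_succ_mem_signedLetters (n : ℕ) : -(n + 1 : ℤ) ∈ signedLetters (n + 1) := by
  simp [signedLetters_succ]

lemma signedLetters_subset_succ (n : ℕ) : signedLetters n ⊆ signedLetters (n + 1) := by
  rw [signedLetters_succ]
  exact (Finset.subset_insert _ _).trans (Finset.subset_insert _ _)

lemma ne_succ_of_mem_signedLetters (hj : j ∈ signedLetters n) : |j| ≠ |(n + 1 : ℤ)| := by
  have := (mem_signedLetters.mp hj).2
  grind

lemma sum_BFin_pow_codim (t : R) (n : ℕ) :
    ∑ g : BFin n, t ^ codim g.1 = ∏ i ∈ Finset.range n, (1 + (2 * i + 1) * t) := by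
  rw [sum_BFin_eq_prod (w := fun g => t ^ codim g) (a := t) (b := t) (by simp [codim_one])]
  · exact Finset.prod_congr rfl fun i _ => by ring
  · intro n g hg
    rw [codim_signedSwap_succ_mul hg (neg_succ_mem_signedLetters n) (by omega), pow_succ']
  · intro n g hg j hj
    rw [codim_signedSwap_succ_mul hg (signedLetters_subset_succ n hj)
      (fun h => ne_succ_of_mem_signedLetters hj (by rw [h])), pow_succ']

lemma sum_BFin_negSign_mul_pow_codim (t : R) (n : ℕ) :
    ∑ g : BFin n, ((negSign g.1 : ℤ) : R) * t ^ codim g.1 =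
      ∏ i ∈ Finset.range n, (1 + (2 * i - 1) * t) := by
  rw [sum_BFin_eq_prod (w := fun g => ((negSign g : ℤ) : R) * t ^ codim g) (a := -t) (b := t)
    (by simp [codim_one, negSign_one])]
  · exact Finset.prod_congr rfl fun i _ => by ring
  · intro n g hg
    have hn0 : (n + 1 : ℤ) ≠ 0 := by omega
    rw [codim_signedSwap_succ_mul hg (neg_succ_mem_signedLetters n) (by omega),
      negSign_mul (signedSwap_mem_BInf hn0 (neg_ne_zero.mpr hn0)) (BFin_le_BInf hg),
      negSign_signedSwap_neg hn0]
    push_cast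
    ring
  · intro n g hg j hj
    have hn0 : (n + 1 : ℤ) ≠ 0 := by omega
    have hj0 := (mem_signedLetters.mp hj).1
    have hjn := ne_succ_of_mem_signedLetters hj
    rw [codim_signedSwap_succ_mul hg (signedLetters_subset_succ n hj) (fun h => hjn (by rw [h])),
      negSign_mul (signedSwap_mem_BInf hn0 hj0) (BFin_le_BInf hg),
      negSign_signedSwap_of_abs_ne hn0 hj0 hjn.symm, one_mul]
    ring

instance fintypeDInfInfBFin (n : ℕ) : Fintype (DInf ⊓ BFin n : Subgroup (Perm ℤ)) :=
  Fintype.ofInjective (Subgroup.inclusion inf_le_right) (Subgroup.inclusion_injective _)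

/-- The Poincaré polynomial of the reflection length on `D(n + 1)`, whose exponents are
`1, 3, …, 2n - 1, n`. -/
lemma sum_DInf_pow_codim {K : Type*} [Field K] [CharZero K] (t : K) (n : ℕ) :
    ∑ g : (DInf ⊓ BFin (n + 1) : Subgroup (Perm ℤ)), t ^ codim g.1 =
      (∏ i ∈ Finset.range n, (1 + (2 * i + 1) * t)) * (1 + n * t) := by
  have average : ∑ g : (DInf ⊓ BFin (n + 1) : Subgroup (Perm ℤ)), t ^ codim g.1 =
      ∑ g : BFin (n + 1), (t ^ codim g.1 + ((negSign g.1 : ℤ) : K) * t ^ codim g.1) / 2 := by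
    refine Fintype.sum_of_injective (Subgroup.inclusion inf_le_right)
      (Subgroup.inclusion_injective _) _ _ (fun g hg => ?_) fun g => ?_
    · have hneg : negSign g.1 = -1 := by
        refine (Int.units_eq_one_or _).resolve_left fun h => hg ⟨⟨g.1, ?_, g.2⟩, rfl⟩
        exact mem_DInf.mpr ⟨BFin_le_BInf g.2, h⟩
      simp [hneg]
    · simp [(mem_DInf.mp g.2.1).2]
  have shift : ∏ i ∈ Finset.range n, (1 + (2 * ((i + 1 : ℕ) : K) - 1) * t) =
      ∏ i ∈ Finset.range n, (1 + (2 * (i : K) + 1) * t) :=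
    Finset.prod_congr rfl fun i _ => by push_cast; ring
  rw [average, ← Finset.sum_div, Finset.sum_add_distrib, sum_BFin_pow_codim,
    sum_BFin_negSign_mul_pow_codim, Finset.prod_range_succ, Finset.prod_range_succ', shift]
  push_cast
  ring

end GeneratingFunctions

section Necessity

variable {q : ℂ}

/-- If no factor vanishes, two consecutive products with `n > -1/t` have opposite signs. -/
lemma exists_odd_mul_eq_neg_one {t : ℝ} (ht : t < 0)
    (h : ∀ n : ℕ, 0 ≤ (∏ i ∈ Finset.range n, (1 + (2 * (i : ℝ) + 1) * t)) * (1 + n * t)) :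
    ∃ i : ℕ, (2 * (i : ℝ) + 1) * t = -1 := by
  by_contra! hne
  obtain ⟨n, hn⟩ := exists_nat_gt (1 / (-t))
  rw [div_lt_iff₀ (by linarith)] at hn
  have : n * t ≤ 0 := mul_nonpos_of_nonneg_of_nonpos n.cast_nonneg ht.le
  have hprod_ne : ∏ i ∈ Finset.range n, (1 + (2 * (i : ℝ) + 1) * t) ≠ 0 :=
    Finset.prod_ne_zero_iff.mpr fun i _ h0 => hne i (by linarith)
  have hprod_neg : ∏ i ∈ Finset.range n, (1 + (2 * (i : ℝ) + 1) * t) < 0 :=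
    (nonpos_of_mul_nonneg_left (h n) (by linarith)).lt_of_ne hprod_ne
  have hsucc := h (n + 1)
  rw [Finset.prod_range_succ] at hsucc
  have hsucc_nonpos := nonpos_of_mul_nonneg_left hsucc (by push_cast; linarith)
  exact hsucc_nonpos.not_gt (mul_pos_of_neg_of_neg hprod_neg (by linarith))

lemma conj_eq_of_isPosDefOn_pow_codim
    (h : IsPosDefOn (DInf : Set (Perm ℤ)) (fun σ => q ^ codim σ)) : conj q = q := by
  have hmem : signedSwap 2 1 ∈ DInf :=
    signedSwap_mem_DInf (by norm_num) (by norm_num) (by norm_num)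
  have hcodim : codim (signedSwap 2 1) = 1 := by
    simpa [codim_one] using
      codim_signedSwap_succ_mul (one_mem (BFin 1)) (j := 1) (mem_signedLetters.mpr (by simp))
  simpa [codim_inv, hcodim] using (h.map_inv (one_mem DInf) hmem).symm

lemma exists_odd_mul_eq_neg_one_of_isPosDefOn {t : ℝ} (ht : t < 0)
    (h : IsPosDefOn (DInf : Set (Perm ℤ)) (fun σ => (t : ℂ) ^ codim σ)) :
    ∃ i : ℕ, (2 * (i : ℝ) + 1) * t = -1 := by
  refine exists_odd_mul_eq_neg_one ht fun n => ?_
  have hsum := h.sum_subgroup_nonneg (H := DInf ⊓ BFin (n + 1)) inf_le_left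
  rw [sum_DInf_pow_codim] at hsum
  exact_mod_cast hsum

theorem eq_zero_or_inv_odd_of_isPosDefOn_pow_codim
    (h : IsPosDefOn (DInf : Set (Perm ℤ)) (fun σ => q ^ codim σ)) :
    q = 0 ∨ ∃ N : ℤ, q = 1 / (2 * (N : ℂ) + 1) := by
  obtain ⟨t, rfl⟩ := Complex.conj_eq_iff_real.mp (conj_eq_of_isPosDefOn_pow_codim h)
  rcases lt_trichotomy t 0 with ht | rfl | ht
  · obtain ⟨i, hi⟩ := exists_odd_mul_eq_neg_one_of_isPosDefOn ht h
    refine .inr ⟨-(i + 1), ?_⟩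
    have hq : t = 1 / (2 * (-((i : ℝ) + 1)) + 1) := by
      rw [eq_div_iff (by linarith)]
      linarith
    rw [hq]
    push_cast
    rfl
  · exact .inl Complex.ofReal_zero
  · have hneg := h.neg_pow_codim DInf_le_BInf
    rw [← Complex.ofReal_neg] at hneg
    obtain ⟨i, hi⟩ := exists_odd_mul_eq_neg_one_of_isPosDefOn (neg_neg_of_pos ht) hneg
    refine .inr ⟨i, ?_⟩
    have hq : t = 1 / (2 * (i : ℝ) + 1) := by
      rw [eq_div_iff (by positivity)]
      linarith
    rw [hq]
    push_cast
    rfl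

end Necessity

/-- the reflection function of D(∞) is positive definite iff it is a
character iff it is an extreme character iff q = 0 or q = 1/(2N+1) for some N ∈ ℤ. -/
theorem reflection_function_typeD (q : ℂ) :
    List.TFAE
      [IsPosDefOn DInfSet (fun σ => q ^ reflLenD σ),
       reflFunD q ∈ CharSetD,
       reflFunD q ∈ Set.extremePoints ℝ CharSetD,
       q = 0 ∨ ∃ N : ℤ, q = 1 / (2 * (N : ℂ) + 1)] := by
  rw [isPosDefOn_pow_reflLenD_iff]
  tfae_have 1 ↔ 2 := reflFunD_mem_CharSetD_iff.symm
  tfae_have 3 → 2 := fun h => h.1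
  tfae_have 2 → 3 := fun h => reflFunD_mem_extremePoints
    (conj_eq_of_isPosDefOn_pow_codim (reflFunD_mem_CharSetD_iff.mp h)) h
  tfae_have 1 → 4 := eq_zero_or_inv_odd_of_isPosDefOn_pow_codim
  tfae_have 4 → 1 := by
    rintro (rfl | ⟨N, rfl⟩)
    · exact isPosDefOn_zero_pow_codim.mono DInf_le_BInf
    · exact (isPosDefOn_inv_odd_pow_codim N).mono DInf_le_BInf
  tfae_finish

end TypeD
end
end
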